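/- arXiv:0903.0444 — 4 statements merged into one kernel-verified Lean document; each statement's English description precedes it below -/
import Mathlib

section
/- Let 𝒜 = {A₁,…,Aₙ} be a finite family of real 2×2 matrices and let 𝒜₁ = 𝒜 ∪ {A_iA_j : A_i, A_j ∈ 𝒜, det A_i < 0, det A_j < 0, and A_iA_j is not a scalar multiple of the identity}. If there exists a proper cone K ⊆ ℝ² invariant under every matrix of 𝒜, then: (i) every matrix in 𝒜₁ is a Vandergraft matrix; (ii) the non-diagonalizable matrices in 𝒜₁ have at most two distinct dominant eigenlines, and any two non-diagonalizable matrices in 𝒜₁ with the same dominant eigenline have the same orientation; and (iii) there exists a proper cone C ⊆ ℝ² such that every dominant eigenvector of every matrix in 𝒜₁ that is not a scalar multiple of the identity lies in C ∪ (−C), while no non-dominant eigenvector of any matrix in 𝒜₁ lies in the interior of C ∪ (−C). -/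
/-- A set `K ⊆ ℝ^m` is a proper cone: closed under nonnegative scaling,
convex (closed under addition), topologically closed, pointed and solid. -/
def IsProperCone {m : ℕ} (K : Set (Fin m → ℝ)) : Prop :=
  (∀ a : ℝ, 0 ≤ a → ∀ x ∈ K, a • x ∈ K) ∧
  (∀ x ∈ K, ∀ y ∈ K, x + y ∈ K) ∧
  IsClosed K ∧ K ∩ (-K) = {0} ∧ (interior K).Nonempty

/-- `K` is invariant under the matrix `A`. -/
def InvariantUnder {m : ℕ} (A : Matrix (Fin m) (Fin m) ℝ) (K : Set (Fin m → ℝ)) : Prop :=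
  ∀ x ∈ K, A.mulVec x ∈ K

/-- `A` is a Vandergraft matrix: `(trace A)² ≥ 4 det A` and `trace A ≥ 0`. -/
def IsVandergraft (A : Matrix (Fin 2) (Fin 2) ℝ) : Prop :=
  A.trace ^ 2 ≥ 4 * A.det ∧ 0 ≤ A.trace

/-- The spectral radius (largest eigenvalue) of a `2×2` Vandergraft matrix. -/
noncomputable def rho2 (A : Matrix (Fin 2) (Fin 2) ℝ) : ℝ :=
  (A.trace + Real.sqrt (A.trace ^ 2 - 4 * A.det)) / 2

/-- `A` is diagonalizable by a real similarity. -/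
def IsDiagonalizable (A : Matrix (Fin 2) (Fin 2) ℝ) : Prop :=
  ∃ P : Matrix (Fin 2) (Fin 2) ℝ, IsUnit P.det ∧ (P⁻¹ * A * P).IsDiag

/-- `u` is a dominant eigenvector of `A`. -/
noncomputable def DomEigvec (A : Matrix (Fin 2) (Fin 2) ℝ) (u : Fin 2 → ℝ) : Prop :=
  u ≠ 0 ∧ A.mulVec u = rho2 A • u

/-- `v` is a non-dominant eigenvector of `A`: an eigenvector for an
eigenvalue different from the spectral radius. -/
noncomputable def NonDomEigvec (A : Matrix (Fin 2) (Fin 2) ℝ) (v : Fin 2 → ℝ) : Prop :=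
  ∃ μ : ℝ, μ ≠ rho2 A ∧ v ≠ 0 ∧ A.mulVec v = μ • v

/-- `v` is positively associated with the eigenvector `u` relative to `A`. -/
def PosAssoc (A : Matrix (Fin 2) (Fin 2) ℝ) (u v : Fin 2 → ℝ) : Prop :=
  ∃ t x : ℝ, 0 < x ∧ A.mulVec u = t • u ∧ A.mulVec v = t • v + x • u

/-- The extended family `𝒜₁`: `𝒜` together with all products `A i * A j` of
two negative-determinant members that are not scalar multiples of `I`. -/
def fam1 {n : ℕ} (A : Fin n → Matrix (Fin 2) (Fin 2) ℝ) :
    Set (Matrix (Fin 2) (Fin 2) ℝ) :=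
  Set.range A ∪
    {M | ∃ i j : Fin n, (A i).det < 0 ∧ (A j).det < 0 ∧ M = A i * A j ∧
      ¬ ∃ c : ℝ, M = c • (1 : Matrix (Fin 2) (Fin 2) ℝ)}

/-!
A proper cone in the plane is spanned by its two edges, so it is the image of the nonnegative
quadrant under an invertible matrix `P`, and conjugating by `P` turns the matrices that leave the
cone invariant into entrywise nonnegative ones. A nonnegative `N` has nonnegative discriminant
`(N 0 0 - N 1 1) ^ 2 + 4 * (N 0 1 * N 1 0)`. When `N` is not diagonalizable the discriminant
vanishes, which forces `N` to be `a • 1` plus a positive multiple of an off-diagonal matrix unit, so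
its eigenline is a coordinate axis. In general the sign of `y 0 * y 1` for an eigenvector `y` with
eigenvalue `μ` is read off from `(μ - N i i) * y i ^ 2 = N i j * (y i * y j)`, since `N i i` is at
most the dominant eigenvalue.
-/

open Filter Module
open scoped Matrix MatrixGroups Topology

section ConvexCone

variable {E : Type*} [AddCommGroup E] [Module ℝ E] [TopologicalSpace E] [ContinuousAdd E]
  [ContinuousSMul ℝ E]

theorem exists_pos_add_smul_mem_of_mem_nhds {U : Set E} {x : E} (hU : U ∈ 𝓝 x) (v : E) :
    ∃ r : ℝ, 0 < r ∧ x + r • v ∈ U := by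
  have hcont : Continuous fun r : ℝ ↦ x + r • v := by fun_prop
  have hlim : Tendsto (fun r : ℝ ↦ x + r • v) (𝓝[>] 0) (𝓝 x) := by
    simpa using (hcont.tendsto 0).mono_left nhdsWithin_le_nhds
  obtain ⟨r, hrU, hr⟩ := ((hlim.eventually_mem hU).and self_mem_nhdsWithin).exists
  exact ⟨r, hr, hrU⟩

theorem exists_forall_add_smul_mem_iff (K : ConvexCone ℝ E) (hK : IsClosed (K : Set E)) {e : E}
    (he : e ∈ interior (K : Set E)) (hne : -e ∉ K) (x : E) :
    ∃ t : ℝ, ∀ s : ℝ, x + t • e + s • e ∈ K ↔ 0 ≤ s := by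
  set S : Set ℝ := {s | x + s • e ∈ K}
  have hclosed : IsClosed S := hK.preimage (by fun_prop)
  have hupper : ∀ s ∈ S, ∀ s', s < s' → s' ∈ S := fun s hs s' hss' ↦ by
    have := K.add_mem hs (K.smul_mem (sub_pos.2 hss') (interior_subset he))
    rwa [add_assoc, ← add_smul, add_sub_cancel] at this
  have hrescale : ∀ {r : ℝ}, 0 < r → ∀ z, z + r • x ∈ K ↔ x + r⁻¹ • z ∈ K := fun {r} hr z ↦ by
    rw [← K.smul_mem_iff (inv_pos.2 hr), smul_add, inv_smul_smul₀ hr.ne', add_comm]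
  have hnonempty : S.Nonempty := by
    obtain ⟨r, hr, hrK⟩ := exists_pos_add_smul_mem_of_mem_nhds (mem_interior_iff_mem_nhds.1 he) x
    exact ⟨r⁻¹, (hrescale hr e).1 hrK⟩
  have hbdd : BddBelow S := by
    obtain ⟨r, hr, hrK⟩ := exists_pos_add_smul_mem_of_mem_nhds (hK.isOpen_compl.mem_nhds hne) x
    refine ⟨-r⁻¹, fun s hs ↦ not_lt.1 fun hlt ↦ hrK ((hrescale hr (-e)).2 ?_)⟩
    simpa [S] using hupper s hs _ hlt
  have hmin : sInf S ∈ S := hclosed.csInf_mem hnonempty hbdd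
  refine ⟨sInf S, fun s ↦ ?_⟩
  rw [add_assoc, ← add_smul, ← le_add_iff_nonneg_right (sInf S)]
  refine ⟨fun hs ↦ csInf_le hbdd hs, fun hs ↦ ?_⟩
  exact hs.eq_or_lt.elim (fun h ↦ h ▸ hmin) (hupper _ hmin _)

end ConvexCone

theorem nonneg_of_smul_add_smul_mem {E : Type*} [AddCommGroup E] [Module ℝ E]
    (K : ConvexCone ℝ E) {f e : E} (hf : f ∈ K) (hfe : ∀ s : ℝ, f + s • e ∈ K → 0 ≤ s) {r s : ℝ}
    (h : r • f + s • e ∈ K) : 0 ≤ s := by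
  have hc : 0 < |r| + 1 + r := by linarith [neg_abs_le r]
  have hmem : (|r| + 1 + r) • f + s • e ∈ K := by
    rw [add_smul, add_assoc]
    exact K.add_mem (K.smul_mem (by positivity) hf) h
  have hscaled := K.smul_mem (inv_pos.2 hc) hmem
  rw [smul_add, inv_smul_smul₀ hc.ne', smul_smul] at hscaled
  exact nonneg_of_mul_nonneg_right (hfe _ hscaled) (inv_pos.2 hc)

namespace IsProperCone

variable {m : ℕ} {K : Set (Fin m → ℝ)}

/-- A proper cone as a `ConvexCone`, which gives access to Mathlib's lemmas on convex cones. -/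
def toConvexCone (hK : IsProperCone K) : ConvexCone ℝ (Fin m → ℝ) where
  carrier := K
  smul_mem' a ha x hx := hK.1 a ha.le x hx
  add_mem' x hx y hy := hK.2.1 x hx y hy

theorem eq_zero_of_mem_of_neg_mem (hK : IsProperCone K) {x : Fin m → ℝ} (hx : x ∈ K)
    (hnx : -x ∈ K) : x = 0 := by
  have : x ∈ K ∩ -K := ⟨hx, hnx⟩
  rwa [hK.2.2.2.1] at this

theorem neg_notMem_of_mem_interior [NeZero m] (hK : IsProperCone K) {e : Fin m → ℝ}
    (he : e ∈ interior K) : -e ∉ K := fun hne ↦ by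
  obtain rfl := hK.eq_zero_of_mem_of_neg_mem (interior_subset he) hne
  have hmem : ∀ v : Fin m → ℝ, v ∈ K := fun v ↦ by
    obtain ⟨r, hr, hrK⟩ := exists_pos_add_smul_mem_of_mem_nhds (mem_interior_iff_mem_nhds.1 he) v
    rw [zero_add] at hrK
    exact (hK.toConvexCone.smul_mem_iff hr).1 hrK
  exact one_ne_zero (hK.eq_zero_of_mem_of_neg_mem (hmem 1) (hmem (-1)))

end IsProperCone

theorem IsProperCone.exists_edges {K : Set (Fin 2 → ℝ)} (hK : IsProperCone K) :
    ∃ f g : Fin 2 → ℝ, f ∈ K ∧ g ∈ K ∧ ∀ a b : ℝ, a • f + b • g ∈ K → 0 ≤ a ∧ 0 ≤ b := by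
  obtain ⟨e, he⟩ := hK.2.2.2.2
  have hne : -e ∉ K := hK.neg_notMem_of_mem_interior he
  have he0 : e ≠ 0 := by
    rintro rfl
    exact hne (by simpa only [neg_zero] using interior_subset he)
  obtain ⟨w, hw⟩ := exists_linearIndependent_pair_of_one_lt_finrank (R := ℝ) (by simp) he0
  obtain ⟨t, ht⟩ := exists_forall_add_smul_mem_iff hK.toConvexCone hK.2.2.1 he hne w
  obtain ⟨t', ht'⟩ := exists_forall_add_smul_mem_iff hK.toConvexCone hK.2.2.1 he hne (-w)
  set f := w + t • e with hf
  set g := -w + t' • e with hg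
  have hfK : f ∈ hK.toConvexCone := by simpa only [zero_smul, add_zero] using (ht 0).2 le_rfl
  have hgK : g ∈ hK.toConvexCone := by simpa only [zero_smul, add_zero] using (ht' 0).2 le_rfl
  have hsum : f + g = (t + t') • e := by rw [hf, hg]; module
  have hf0 : f ≠ 0 := fun h ↦ (LinearIndependent.pair_iff' he0).1 hw (-t) <| by
    rw [neg_smul, ← eq_neg_of_add_eq_zero_left h]
  have hpos : 0 < t + t' := by
    by_contra! hle
    have hnf : -f = g + -(t + t') • e := by rw [neg_smul, ← hsum]; abel
    exact hf0 (hK.eq_zero_of_mem_of_neg_mem hfK (hnf ▸ (ht' _).2 (neg_nonneg.2 hle)))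
  refine ⟨f, g, hfK, hgK, fun a b hab ↦ ⟨?_, ?_⟩⟩ <;> apply nonneg_of_mul_nonneg_left _ hpos
  · have hrw : a • f + b • g = (b - a) • g + (a * (t + t')) • e := by
      rw [mul_smul, ← hsum]; module
    exact nonneg_of_smul_add_smul_mem hK.toConvexCone hgK (fun s ↦ (ht' s).1) (hrw ▸ hab)
  · have hrw : a • f + b • g = (a - b) • f + (b * (t + t')) • e := by
      rw [mul_smul, ← hsum]; module
    exact nonneg_of_smul_add_smul_mem hK.toConvexCone hfK (fun s ↦ (ht s).1) (hrw ▸ hab)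

theorem IsProperCone.exists_mulVec_mem_iff {K : Set (Fin 2 → ℝ)} (hK : IsProperCone K) :
    ∃ P : GL (Fin 2) ℝ, ∀ y, P.val *ᵥ y ∈ K ↔ 0 ≤ y := by
  obtain ⟨f, g, hf, hg, hfg⟩ := hK.exists_edges
  set Q : Matrix (Fin 2) (Fin 2) ℝ := (Matrix.of ![f, g])ᵀ
  have hQ : ∀ y, Q *ᵥ y = y 0 • f + y 1 • g := fun y ↦ by
    rw [Matrix.mulVec_transpose, Matrix.vecMul_eq_sum, Fin.sum_univ_two]
    rfl
  have hmem : ∀ y, Q *ᵥ y ∈ K ↔ 0 ≤ y := fun y ↦ by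
    rw [hQ, Pi.le_def, Fin.forall_fin_two]
    exact ⟨hfg _ _, fun h ↦ hK.2.1 _ (hK.1 _ h.1 _ hf) _ (hK.1 _ h.2 _ hg)⟩
  have hinj : Function.Injective Q.mulVec := by
    refine (injective_iff_map_eq_zero Q.mulVecLin).2 fun y (hy : Q *ᵥ y = 0) ↦ ?_
    have h0K : (0 : Fin 2 → ℝ) ∈ K := by simpa using hK.1 0 le_rfl f hf
    refine le_antisymm (neg_nonneg.1 ((hmem _).1 ?_)) ((hmem _).1 ?_)
    · rwa [Matrix.mulVec_neg, hy, neg_zero]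
    · rwa [hy]
  exact ⟨(Matrix.mulVec_injective_iff_isUnit.1 hinj).unit, hmem⟩

theorem mul_pos_of_mem_interior_setOf_mul_nonneg {y : Fin 2 → ℝ} (hy : y ≠ 0)
    (h : y ∈ interior {y : Fin 2 → ℝ | 0 ≤ y 0 * y 1}) : 0 < y 0 * y 1 := by
  -- Moving along `-(y 1, y 0)` changes `y 0 * y 1` at the initial rate `-(y 0 ^ 2 + y 1 ^ 2) < 0`.
  obtain ⟨r, hr, hmem⟩ :=
    exists_pos_add_smul_mem_of_mem_nhds (mem_interior_iff_mem_nhds.1 h) (-(y ∘ Equiv.swap 0 1))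
  have hmem : 0 ≤ (y 0 - r * y 1) * (y 1 - r * y 0) := by simpa [sub_eq_add_neg] using hmem
  have hnorm : 0 < y 0 ^ 2 + y 1 ^ 2 := by
    by_contra! hle
    refine hy (funext (Fin.forall_fin_two.2 ⟨?_, ?_⟩))
    · exact pow_eq_zero_iff two_ne_zero |>.1 (by nlinarith [sq_nonneg (y 0), sq_nonneg (y 1)])
    · exact pow_eq_zero_iff two_ne_zero |>.1 (by nlinarith [sq_nonneg (y 0), sq_nonneg (y 1)])
  have hgap : 0 < (1 + r ^ 2) * (y 0 * y 1) := by nlinarith [mul_pos hr hnorm]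
  exact pos_of_mul_pos_right hgap (by positivity)

theorem span_mulVec_eq_span_col {R m : Type*} [Field R] (P : Matrix m (Fin 2) R) {y : Fin 2 → R}
    (hy : y ≠ 0) (hprod : y 0 * y 1 = 0) :
    Submodule.span R {P *ᵥ y} = Submodule.span R {P.col 0} ∨
      Submodule.span R {P *ᵥ y} = Submodule.span R {P.col 1} := by
  have hcols : P *ᵥ y = y 0 • P.col 0 + y 1 • P.col 1 := by
    ext i
    simp [Matrix.mulVec, dotProduct, mul_comm]
  have hne : ¬(y 0 = 0 ∧ y 1 = 0) := fun h ↦ hy (funext (Fin.forall_fin_two.2 h))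
  rcases mul_eq_zero.1 hprod with h | h
  · right
    rw [hcols, h, zero_smul, zero_add]
    exact Submodule.span_singleton_smul_eq (.mk0 _ fun h' ↦ hne ⟨h, h'⟩) _
  · left
    rw [hcols, h, zero_smul, add_zero]
    exact Submodule.span_singleton_smul_eq (.mk0 _ fun h' ↦ hne ⟨h', h⟩) _

section Eigenvalue

theorem exists_mulVec_eq_smul_iff {F : Type*} [Field F] [NeZero (2 : F)]
    {A : Matrix (Fin 2) (Fin 2) F} {μ : F} :
    (∃ u ≠ 0, A *ᵥ u = μ • u) ↔ (2 * μ - A.trace) ^ 2 = A.discr := by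
  have hker : ∀ u, A *ᵥ u = μ • u ↔ (A - Matrix.scalar (Fin 2) μ) *ᵥ u = 0 := fun u ↦ by
    rw [Matrix.sub_mulVec, sub_eq_zero, Matrix.scalar_apply, ← Matrix.smul_one_eq_diagonal,
      Matrix.smul_mulVec, Matrix.one_mulVec]
  have hdet : 4 * (A - Matrix.scalar (Fin 2) μ).det = (2 * μ - A.trace) ^ 2 - A.discr := by
    rw [Matrix.scalar_apply, Matrix.det_fin_two, Matrix.discr_fin_two, Matrix.det_fin_two,
      Matrix.trace_fin_two]
    simp only [Matrix.sub_apply, Matrix.diagonal_apply, ↓reduceIte, zero_ne_one, one_ne_zero]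
    ring
  have h4 : (4 : F) ≠ 0 := by
    rw [show (4 : F) = 2 * 2 by norm_num]
    exact mul_ne_zero two_ne_zero two_ne_zero
  simp_rw [hker]
  rw [Matrix.exists_mulVec_eq_zero_iff, ← sub_eq_zero (b := A.discr), ← hdet, mul_eq_zero,
    or_iff_right h4]

theorem sub_apply_mul_sq_eq {R : Type*} [CommRing R] {A : Matrix (Fin 2) (Fin 2) R} {μ : R}
    {y : Fin 2 → R} (h : A *ᵥ y = μ • y) {i j : Fin 2} (hij : i ≠ j) :
    (μ - A i i) * y i ^ 2 = A i j * (y i * y j) := by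
  have hi : A i i * y i + A i j * y j = μ * y i := by
    have hsum : (A *ᵥ y) i = A i i * y i + A i j * y j :=
      Fintype.sum_eq_add (f := fun k ↦ A i k * y k) i j hij fun k hk ↦ by omega
    rw [← hsum, h, Pi.smul_apply, smul_eq_mul]
  linear_combination (-y i) * hi

variable {A : Matrix (Fin 2) (Fin 2) ℝ}

theorem rho2_eq_trace_add_sqrt_discr (A : Matrix (Fin 2) (Fin 2) ℝ) :
    rho2 A = (A.trace + √A.discr) / 2 := by
  rw [rho2, Matrix.discr_fin_two]

theorem eq_rho2_of_mulVec_eq_smul {μ : ℝ} {u : Fin 2 → ℝ} (hu : u ≠ 0) (h : A *ᵥ u = μ • u)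
    (hμ : A.trace ≤ 2 * μ) : μ = rho2 A := by
  rw [rho2_eq_trace_add_sqrt_discr, ← exists_mulVec_eq_smul_iff.1 ⟨u, hu, h⟩,
    Real.sqrt_sq (sub_nonneg.2 hμ)]
  ring

theorem isDiagonalizable_of_mulVec_eq_smul {μ : Fin 2 → ℝ} (hμ : Function.Injective μ)
    {v : Fin 2 → Fin 2 → ℝ} (hv : ∀ i, v i ≠ 0) (h : ∀ i, A *ᵥ v i = μ i • v i) :
    IsDiagonalizable A := by
  set Q : Matrix (Fin 2) (Fin 2) ℝ := (Matrix.of v)ᵀ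
  have hli : LinearIndependent ℝ Q.col :=
    End.eigenvectors_linearIndependent' A.mulVecLin μ hμ v fun i ↦
      ⟨End.mem_eigenspace_iff.2 (h i), hv i⟩
  have hQ : IsUnit Q.det :=
    (Matrix.isUnit_iff_isUnit_det Q).1 (Matrix.linearIndependent_cols_iff_isUnit.1 hli)
  have hAQ : A * Q = Q * Matrix.diagonal μ := by
    ext i j
    rw [Matrix.mul_diagonal, mul_comm]
    exact congrFun (h j) i
  refine ⟨Q, hQ, ?_⟩
  rw [mul_assoc, hAQ, Matrix.nonsing_inv_mul_cancel_left _ _ hQ]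
  exact Matrix.isDiag_diagonal μ

theorem isDiagonalizable_of_discr_pos (hA : 0 < A.discr) : IsDiagonalizable A := by
  have hsqrt : 0 < √A.discr := Real.sqrt_pos.2 hA
  set μ : Fin 2 → ℝ := ![(A.trace + √A.discr) / 2, (A.trace - √A.discr) / 2]
  have hμ : Function.Injective μ :=
    injective_pair_iff_ne.2 fun h ↦ by linarith
  have hroot : ∀ i, (2 * μ i - A.trace) ^ 2 = A.discr := by
    simp only [Fin.forall_fin_two, μ, Matrix.cons_val_zero, Matrix.cons_val_one]
    constructor <;> linear_combination Real.sq_sqrt hA.le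
  choose v hv h using fun i ↦ exists_mulVec_eq_smul_iff.2 (hroot i)
  exact isDiagonalizable_of_mulVec_eq_smul hμ hv h

theorem IsVandergraft.isParabolic_of_not_isDiagonalizable (hA : IsVandergraft A)
    (h : ¬IsDiagonalizable A) : A.IsParabolic := by
  have hdiscr : 0 ≤ A.discr := by
    rw [Matrix.discr_fin_two]
    exact sub_nonneg.2 hA.1
  refine ⟨?_, le_antisymm (not_lt.1 fun hpos ↦ h (isDiagonalizable_of_discr_pos hpos)) hdiscr⟩
  rintro ⟨c, rfl⟩
  exact h ⟨1, by simp, by simp [Matrix.isDiag_diagonal]⟩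

end Eigenvalue

section Nonneg

variable {N : Matrix (Fin 2) (Fin 2) ℝ}

theorem discr_nonneg_of_mul_nonneg (h : 0 ≤ N 0 1 * N 1 0) : 0 ≤ N.discr := by
  rw [Matrix.discr_fin_two, Matrix.trace_fin_two, Matrix.det_fin_two]
  nlinarith [sq_nonneg (N 0 0 - N 1 1)]

theorem apply_self_le_rho2 (h : 0 ≤ N 0 1 * N 1 0) (i : Fin 2) : N i i ≤ rho2 N := by
  have hgap : |N 0 0 - N 1 1| ≤ √N.discr := by
    apply Real.abs_le_sqrt
    rw [Matrix.discr_fin_two, Matrix.trace_fin_two, Matrix.det_fin_two]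
    linarith
  rw [abs_le] at hgap
  rw [rho2_eq_trace_add_sqrt_discr, Matrix.trace_fin_two]
  fin_cases i <;> simp only [Fin.zero_eta, Fin.mk_one] <;> linarith

theorem isVandergraft_of_nonneg (hN : ∀ i j, 0 ≤ N i j) : IsVandergraft N := by
  have hdiscr := discr_nonneg_of_mul_nonneg (mul_nonneg (hN 0 1) (hN 1 0))
  rw [Matrix.discr_fin_two] at hdiscr
  refine ⟨sub_nonneg.1 hdiscr, ?_⟩
  rw [Matrix.trace_fin_two]
  exact add_nonneg (hN 0 0) (hN 1 1)

theorem DomEigvec.mul_nonneg_of_nonneg {y : Fin 2 → ℝ} (hy : DomEigvec N y)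
    (hN : ∀ i j, 0 ≤ N i j) (hscalar : ¬∃ c : ℝ, N = c • (1 : Matrix (Fin 2) (Fin 2) ℝ)) :
    0 ≤ y 0 * y 1 := by
  by_contra! hneg
  have hentry : ∀ i j, i ≠ j → y i * y j < 0 → N i i = rho2 N ∧ N i j = 0 := by
    intro i j hij hlt
    have heq := sub_apply_mul_sq_eq hy.2 hij
    have hle := apply_self_le_rho2 (mul_nonneg (hN 0 1) (hN 1 0)) i
    have hyi : 0 < y i ^ 2 := sq_pos_of_ne_zero (left_ne_zero_of_mul hlt.ne)
    have hNij : N i j = 0 := by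
      by_contra hne
      have := mul_neg_of_pos_of_neg ((hN i j).lt_of_ne' hne) hlt
      have := mul_nonneg (sub_nonneg.2 hle) hyi.le
      linarith
    rw [hNij, zero_mul, mul_eq_zero, sub_eq_zero] at heq
    exact ⟨(heq.resolve_right hyi.ne').symm, hNij⟩
  obtain ⟨h00, h01⟩ := hentry 0 1 (by decide) hneg
  obtain ⟨h11, h10⟩ := hentry 1 0 (by decide) (by rwa [mul_comm])
  refine hscalar ⟨rho2 N, ?_⟩
  ext i j
  fin_cases i <;> fin_cases j <;> simp [h00, h01, h10, h11]

theorem NonDomEigvec.mul_nonpos_of_nonneg {y : Fin 2 → ℝ} (hy : NonDomEigvec N y)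
    (hN : ∀ i j, 0 ≤ N i j) : y 0 * y 1 ≤ 0 := by
  obtain ⟨μ, hμ, hy0, h⟩ := hy
  by_contra! hpos
  have hle : ∀ i j, i ≠ j → 0 < y i * y j → N i i ≤ μ := by
    intro i j hij hlt
    have hprod : 0 ≤ (μ - N i i) * y i ^ 2 := by
      rw [sub_apply_mul_sq_eq h hij]
      exact mul_nonneg (hN i j) hlt.le
    have hyi : 0 < y i ^ 2 := sq_pos_of_ne_zero (left_ne_zero_of_mul hlt.ne')
    exact sub_nonneg.1 (nonneg_of_mul_nonneg_left hprod hyi)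
  refine hμ (eq_rho2_of_mulVec_eq_smul hy0 h ?_)
  rw [Matrix.trace_fin_two]
  linarith [hle 0 1 (by decide) hpos, hle 1 0 (by decide) (by rwa [mul_comm])]

theorem exists_eq_smul_one_add_single_of_isParabolic_of_nonneg (hN : ∀ i j, 0 ≤ N i j)
    (hp : N.IsParabolic) :
    ∃ i j : Fin 2, i ≠ j ∧ ∃ a b : ℝ, 0 < b ∧ N = a • 1 + Matrix.single i j b := by
  have hdiscr : (N 0 0 - N 1 1) ^ 2 + 4 * (N 0 1 * N 1 0) = 0 := by
    rw [← hp.2, Matrix.discr_fin_two, Matrix.trace_fin_two, Matrix.det_fin_two]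
    ring
  have hoff := mul_nonneg (hN 0 1) (hN 1 0)
  have hdiag : N 0 0 = N 1 1 := by
    refine sub_eq_zero.1 (pow_eq_zero_iff two_ne_zero |>.1 ?_)
    linarith [sq_nonneg (N 0 0 - N 1 1)]
  rw [hdiag, sub_self] at hdiscr
  have hne : ¬(N 0 1 = 0 ∧ N 1 0 = 0) := fun ⟨h01, h10⟩ ↦ hp.1 ⟨N 1 1, by
    ext i j
    fin_cases i <;> fin_cases j <;> simp [h01, h10, hdiag]⟩
  rcases mul_eq_zero.1 (show N 0 1 * N 1 0 = 0 by linarith) with h | h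
  · refine ⟨1, 0, by decide, N 1 1, N 1 0, (hN 1 0).lt_of_ne' fun h' ↦ hne ⟨h, h'⟩, ?_⟩
    ext i j
    fin_cases i <;> fin_cases j <;> simp [h, hdiag]
  · refine ⟨0, 1, by decide, N 1 1, N 0 1, (hN 0 1).lt_of_ne' fun h' ↦ hne ⟨h', h⟩, ?_⟩
    ext i j
    fin_cases i <;> fin_cases j <;> simp [h, hdiag]

theorem smul_one_add_single_mulVec {R n : Type*} [CommRing R] [Fintype n] [DecidableEq n]
    (a b : R) (i j : n) (y : n → R) :
    (a • (1 : Matrix n n R) + Matrix.single i j b) *ᵥ y = a • y + (b * y j) • Pi.single i 1 := by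
  rw [Matrix.add_mulVec, Matrix.smul_mulVec, Matrix.one_mulVec, Matrix.single_mulVec_eq]

theorem apply_eq_zero_of_smul_one_add_single_mulVec_eq_smul {R n : Type*} [CommRing R] [IsDomain R]
    [Fintype n] [DecidableEq n] {a b μ : R} {i j : n} (hij : i ≠ j) (hb : b ≠ 0) {y : n → R}
    (h : (a • (1 : Matrix n n R) + Matrix.single i j b) *ᵥ y = μ • y) : y j = 0 := by
  rw [smul_one_add_single_mulVec] at h
  by_contra hyj
  have hμ : a = μ := mul_right_cancel₀ hyj (by simpa [hij.symm] using congrFun h j)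
  have hbyj : b * y j = 0 := by simpa [hμ] using congrFun h i
  exact mul_ne_zero hb hyj hbyj

theorem posAssoc_smul_one_add_single_iff {a b : ℝ} (hb : 0 < b) {i j : Fin 2} (hij : i ≠ j)
    {y : Fin 2 → ℝ} (hyi : y i ≠ 0) (hyj : y j = 0) (z : Fin 2 → ℝ) :
    PosAssoc (a • 1 + Matrix.single i j b) y z ↔ 0 < y i * z j := by
  have hy : y = y i • Pi.single i 1 := by
    ext k
    fin_cases i <;> fin_cases j <;> fin_cases k <;> simp_all
  have hsq : 0 < y i ^ 2 := sq_pos_of_ne_zero hyi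
  simp only [PosAssoc, smul_one_add_single_mulVec, hyj, mul_zero, zero_smul, add_zero]
  constructor
  · rintro ⟨t, x, hx, hty, htz⟩
    obtain rfl : a = t := mul_right_cancel₀ hyi (by simpa using congrFun hty i)
    have hbz : b * z j = x * y i := by simpa using congrFun htz i
    have hprod : b * (y i * z j) = x * y i ^ 2 := by linear_combination y i * hbz
    exact pos_of_mul_pos_right (hprod ▸ mul_pos hx hsq) hb.le
  · intro hpos
    have hcoeff : b * (y i * z j) / y i ^ 2 * y i = b * z j := by field_simp
    exact ⟨a, b * (y i * z j) / y i ^ 2, by positivity, rfl, by rw [← hcoeff, mul_smul, ← hy]⟩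

theorem mul_eq_zero_of_isParabolic_of_nonneg (hN : ∀ i j, 0 ≤ N i j) (hp : N.IsParabolic)
    {μ : ℝ} {y : Fin 2 → ℝ} (h : N *ᵥ y = μ • y) : y 0 * y 1 = 0 := by
  obtain ⟨i, j, hij, a, b, hb, rfl⟩ := exists_eq_smul_one_add_single_of_isParabolic_of_nonneg hN hp
  have hyj := apply_eq_zero_of_smul_one_add_single_mulVec_eq_smul hij hb.ne' h
  fin_cases i <;> fin_cases j <;> simp_all

/- As `y` lies on a coordinate axis, one of the two summands on the right vanishes; keeping both
makes the criterion independent of `N`. -/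
theorem posAssoc_iff_of_isParabolic_of_nonneg (hN : ∀ i j, 0 ≤ N i j) (hp : N.IsParabolic)
    {μ : ℝ} {y : Fin 2 → ℝ} (hy : y ≠ 0) (h : N *ᵥ y = μ • y) (z : Fin 2 → ℝ) :
    PosAssoc N y z ↔ 0 < y 0 * z 1 + y 1 * z 0 := by
  obtain ⟨i, j, hij, a, b, hb, rfl⟩ := exists_eq_smul_one_add_single_of_isParabolic_of_nonneg hN hp
  have hyj := apply_eq_zero_of_smul_one_add_single_mulVec_eq_smul hij hb.ne' h
  have hyi : y i ≠ 0 := fun hyi ↦ hy (funext fun k ↦ by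
    fin_cases i <;> fin_cases j <;> fin_cases k <;> simp_all)
  rw [posAssoc_smul_one_add_single_iff hb hij hyi hyj]
  fin_cases i <;> fin_cases j <;> simp_all

end Nonneg

section Conjugation

theorem conj_mulVec_eq_iff {R n : Type*} [CommRing R] [Fintype n] [DecidableEq n] (P : GL n R)
    (M : Matrix n n R) (y z : n → R) :
    (P.val⁻¹ * M * P.val) *ᵥ y = z ↔ M *ᵥ (P.val *ᵥ y) = P.val *ᵥ z := by
  rw [← (Matrix.mulVec_injective_of_isUnit P.isUnit).eq_iff, Matrix.mulVec_mulVec,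
    Matrix.mulVec_mulVec, mul_assoc, Matrix.mul_nonsing_inv_cancel_left _ _
      ((Matrix.isUnit_iff_isUnit_det _).1 P.isUnit)]

theorem mulVec_ne_zero_iff {R n : Type*} [CommRing R] [Fintype n] [DecidableEq n] (P : GL n R)
    {y : n → R} : P.val *ᵥ y ≠ 0 ↔ y ≠ 0 :=
  (Matrix.mulVec_injective_of_isUnit P.isUnit).ne_iff' (Matrix.mulVec_zero _)

theorem conj_eq_smul_one_iff {R n : Type*} [CommRing R] [Fintype n] [DecidableEq n] (P : GL n R)
    {M : Matrix n n R} {c : R} : P.val⁻¹ * M * P.val = c • 1 ↔ M = c • 1 := by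
  have hP := (Matrix.isUnit_iff_isUnit_det _).1 P.isUnit
  constructor <;> intro h
  · calc M = P.val * (P.val⁻¹ * M * P.val) * P.val⁻¹ := by
          rw [mul_assoc P.val⁻¹, Matrix.mul_nonsing_inv_cancel_left _ _ hP,
            Matrix.mul_nonsing_inv_cancel_right _ _ hP]
      _ = c • 1 := by rw [h]; simp [hP]
  · rw [h]; simp [hP]

variable (P : GL (Fin 2) ℝ) (M : Matrix (Fin 2) (Fin 2) ℝ)

theorem rho2_conj : rho2 (P.val⁻¹ * M * P.val) = rho2 M := by
  rw [rho2, rho2, Matrix.trace_conj' P.isUnit, Matrix.det_conj' P.isUnit]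

theorem isVandergraft_conj_iff : IsVandergraft (P.val⁻¹ * M * P.val) ↔ IsVandergraft M := by
  rw [IsVandergraft, IsVandergraft, Matrix.trace_conj' P.isUnit, Matrix.det_conj' P.isUnit]

variable (y z : Fin 2 → ℝ)

theorem domEigvec_conj_iff :
    DomEigvec (P.val⁻¹ * M * P.val) y ↔ DomEigvec M (P.val *ᵥ y) := by
  rw [DomEigvec, DomEigvec, rho2_conj, conj_mulVec_eq_iff, Matrix.mulVec_smul, mulVec_ne_zero_iff]

theorem nonDomEigvec_conj_iff :
    NonDomEigvec (P.val⁻¹ * M * P.val) y ↔ NonDomEigvec M (P.val *ᵥ y) := by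
  simp only [NonDomEigvec, rho2_conj, conj_mulVec_eq_iff, Matrix.mulVec_smul, mulVec_ne_zero_iff]

theorem posAssoc_conj_iff :
    PosAssoc (P.val⁻¹ * M * P.val) y z ↔ PosAssoc M (P.val *ᵥ y) (P.val *ᵥ z) := by
  simp only [PosAssoc, conj_mulVec_eq_iff, Matrix.mulVec_smul, Matrix.mulVec_add]

end Conjugation

section Coordinates

theorem conj_apply_nonneg {m : ℕ} {K : Set (Fin m → ℝ)} {P : GL (Fin m) ℝ}
    (hP : ∀ y, P.val *ᵥ y ∈ K ↔ 0 ≤ y) {M : Matrix (Fin m) (Fin m) ℝ} (hM : InvariantUnder M K)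
    (i j : Fin m) : 0 ≤ (P.val⁻¹ * M * P.val) i j := by
  have hcol : 0 ≤ (P.val⁻¹ * M * P.val) *ᵥ Pi.single j 1 := by
    rw [← hP, ← (conj_mulVec_eq_iff P M _ _).1 rfl]
    exact hM _ ((hP _).2 (Pi.single_nonneg.2 zero_le_one))
  rw [Matrix.mulVec_single_one] at hcol
  exact hcol i

variable {K : Set (Fin 2 → ℝ)} {P : Matrix (Fin 2) (Fin 2) ℝ}

theorem mulVec_mem_union_neg_iff (hP : ∀ y, P *ᵥ y ∈ K ↔ 0 ≤ y) (y : Fin 2 → ℝ) :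
    P *ᵥ y ∈ K ∪ -K ↔ 0 ≤ y 0 * y 1 := by
  rw [Set.mem_union, Set.mem_neg, ← Matrix.mulVec_neg, hP, hP, neg_nonneg, Pi.le_def, Pi.le_def,
    Fin.forall_fin_two, Fin.forall_fin_two, mul_nonneg_iff]
  rfl

theorem mul_pos_of_mulVec_mem_interior_union_neg (hP : ∀ y, P *ᵥ y ∈ K ↔ 0 ≤ y) {y : Fin 2 → ℝ}
    (hy : y ≠ 0) (h : P *ᵥ y ∈ interior (K ∪ -K)) : 0 < y 0 * y 1 := by
  have hpre : P.mulVec ⁻¹' (K ∪ -K) = {y | 0 ≤ y 0 * y 1} :=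
    Set.ext (mulVec_mem_union_neg_iff hP)
  have hcont : Continuous P.mulVec := P.mulVecLin.continuous_of_finiteDimensional
  apply mul_pos_of_mem_interior_setOf_mul_nonneg hy
  rw [← hpre]
  exact preimage_interior_subset_interior_preimage hcont h

end Coordinates

theorem InvariantUnder.mul {m : ℕ} {K : Set (Fin m → ℝ)} {A B : Matrix (Fin m) (Fin m) ℝ}
    (hA : InvariantUnder A K) (hB : InvariantUnder B K) : InvariantUnder (A * B) K := fun x hx ↦ by
  rw [← Matrix.mulVec_mulVec]
  exact hA _ (hB x hx)

theorem invariantUnder_of_mem_fam1 {n : ℕ} {A : Fin n → Matrix (Fin 2) (Fin 2) ℝ}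
    {K : Set (Fin 2 → ℝ)} (hA : ∀ i, InvariantUnder (A i) K) {M : Matrix (Fin 2) (Fin 2) ℝ}
    (hM : M ∈ fam1 A) : InvariantUnder M K := by
  rcases hM with ⟨i, rfl⟩ | ⟨i, j, -, -, rfl, -⟩
  · exact hA i
  · exact (hA i).mul (hA j)

theorem necessary_conditions_common_invariant_cone_general {K : Set (Fin 2 → ℝ)}
    (hK : IsProperCone K) {S : Set (Matrix (Fin 2) (Fin 2) ℝ)} (hS : ∀ M ∈ S, InvariantUnder M K) :
    (∀ M ∈ S, IsVandergraft M) ∧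
    (∃ L₁ L₂ : Submodule ℝ (Fin 2 → ℝ),
      ∀ M ∈ S, ¬ IsDiagonalizable M → ∀ u, DomEigvec M u →
        Submodule.span ℝ {u} = L₁ ∨ Submodule.span ℝ {u} = L₂) ∧
    (∀ M ∈ S, ∀ M' ∈ S, ¬ IsDiagonalizable M → ¬ IsDiagonalizable M' →
      ∀ u, DomEigvec M u → DomEigvec M' u →
        ∀ v : Fin 2 → ℝ, PosAssoc M u v ↔ PosAssoc M' u v) ∧
    (∀ M ∈ S, (¬ ∃ c : ℝ, M = c • (1 : Matrix (Fin 2) (Fin 2) ℝ)) →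
      ∀ u, DomEigvec M u → u ∈ K ∪ (-K)) ∧
    (∀ M ∈ S, ∀ v, NonDomEigvec M v → v ∉ interior (K ∪ (-K))) := by
  obtain ⟨P, hP⟩ := hK.exists_mulVec_mem_iff
  have hnonneg M (hM : M ∈ S) := conj_apply_nonneg hP (hS M hM)
  have hvandergraft M (hM : M ∈ S) : IsVandergraft M :=
    (isVandergraft_conj_iff P M).1 (isVandergraft_of_nonneg (hnonneg M hM))
  have hparabolic M (hM : M ∈ S) (hd : ¬IsDiagonalizable M) :
      (P.val⁻¹ * M * P.val).IsParabolic :=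
    (Matrix.isParabolic_conj'_iff P).2 ((hvandergraft M hM).isParabolic_of_not_isDiagonalizable hd)
  have hsurj : Function.Surjective P.val.mulVec := Matrix.mulVec_surjective_iff_isUnit.2 P.isUnit
  refine ⟨hvandergraft,
    ⟨Submodule.span ℝ {P.val.col 0}, Submodule.span ℝ {P.val.col 1}, fun M hM hd ↦ ?_⟩,
    fun M hM M' hM' hd hd' ↦ ?_, fun M hM hscalar ↦ ?_, fun M hM ↦ ?_⟩ <;>
    refine hsurj.forall.2 fun y hy ↦ ?_
  · rw [← domEigvec_conj_iff] at hy
    exact span_mulVec_eq_span_col P.val hy.1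
      (mul_eq_zero_of_isParabolic_of_nonneg (hnonneg M hM) (hparabolic M hM hd) hy.2)
  · rw [← domEigvec_conj_iff] at hy
    refine fun hy' ↦ hsurj.forall.2 fun z ↦ ?_
    rw [← domEigvec_conj_iff] at hy'
    rw [← posAssoc_conj_iff, ← posAssoc_conj_iff,
      posAssoc_iff_of_isParabolic_of_nonneg (hnonneg M hM) (hparabolic M hM hd) hy.1 hy.2,
      posAssoc_iff_of_isParabolic_of_nonneg (hnonneg M' hM') (hparabolic M' hM' hd') hy'.1 hy'.2]
  · rw [← domEigvec_conj_iff] at hy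
    rw [mulVec_mem_union_neg_iff hP]
    refine hy.mul_nonneg_of_nonneg (hnonneg M hM) ?_
    simpa only [conj_eq_smul_one_iff] using hscalar
  · rw [← nonDomEigvec_conj_iff] at hy
    have ⟨_, _, hy0, _⟩ := hy
    exact fun hint ↦ (hy.mul_nonpos_of_nonneg (hnonneg M hM)).not_gt
      (mul_pos_of_mulVec_mem_interior_union_neg hP hy0 hint)

/-- Theorem: necessary conditions for the existence of a common invariant
proper cone for a finite family `𝒜` of real `2×2` matrices. -/
theorem necessary_conditions_common_invariant_cone
    (n : ℕ) (A : Fin n → Matrix (Fin 2) (Fin 2) ℝ)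
    (hex : ∃ K : Set (Fin 2 → ℝ), IsProperCone K ∧ ∀ i, InvariantUnder (A i) K) :
    (∀ M ∈ fam1 A, IsVandergraft M) ∧
    (∃ L₁ L₂ : Submodule ℝ (Fin 2 → ℝ),
      ∀ M ∈ fam1 A, ¬ IsDiagonalizable M → ∀ u, DomEigvec M u →
        Submodule.span ℝ {u} = L₁ ∨ Submodule.span ℝ {u} = L₂) ∧
    (∀ M ∈ fam1 A, ∀ M' ∈ fam1 A, ¬ IsDiagonalizable M → ¬ IsDiagonalizable M' →
      ∀ u, DomEigvec M u → DomEigvec M' u →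
        ∀ v : Fin 2 → ℝ, PosAssoc M u v ↔ PosAssoc M' u v) ∧
    (∃ C : Set (Fin 2 → ℝ), IsProperCone C ∧
      (∀ M ∈ fam1 A, (¬ ∃ c : ℝ, M = c • (1 : Matrix (Fin 2) (Fin 2) ℝ)) →
        ∀ u, DomEigvec M u → u ∈ C ∪ (-C)) ∧
      (∀ M ∈ fam1 A, ∀ v, NonDomEigvec M v → v ∉ interior (C ∪ (-C)))) := by
  obtain ⟨K, hK, hA⟩ := hex
  obtain ⟨hvandergraft, hlines, horient, heigvec⟩ :=
    necessary_conditions_common_invariant_cone_general hK (S := fam1 A) fun M hM ↦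
      invariantUnder_of_mem_fam1 hA hM
  exact ⟨hvandergraft, hlines, horient, K, hK, heigvec⟩
end

section
/- Let 𝒜 = {A₁,…,Aₙ} be a finite family of diagonalizable real 2×2 matrices with det A_j ≥ 0 for every j. Then there exists a proper cone K ⊆ ℝ² invariant under every A_j if and only if (i) every A_j is a Vandergraft matrix, and (ii) there exists a proper cone C ⊆ ℝ² such that every dominant eigenvector of every A_j that is not a scalar multiple of the identity lies in C ∪ (−C), while no non-dominant eigenvector of any A_j lies in the interior of C ∪ (−C). -/
/-!
Let `m ≤ l` be the eigenvalues of a diagonalizable `A`. Then `A = m • 1 + (l - m) • P`, where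
`P = u fᵀ` is the spectral projection onto the dominant eigenline `ℝ u` along the non-dominant
eigenline `ker f`. For `0 ≤ m < l` the powers of `l⁻¹ A` converge to `P`, so a closed convex cone is
invariant under `A` exactly when it is invariant under `P`. A proper cone `K`, with the sign of `u`
chosen so that `u ∈ K`, is invariant under `P` exactly when `f` is nonnegative on `K`, and this
means that the hyperplane `ker f` does not cross the interior of `K`.
-/

section ProperCones

open Matrix

variable {m : ℕ} {K : Set (Fin m → ℝ)}

namespace IsProperCone

theorem smul_mem (hK : IsProperCone K) {a : ℝ} (ha : 0 ≤ a) {x : Fin m → ℝ} (hx : x ∈ K) :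
    a • x ∈ K :=
  hK.1 a ha x hx

theorem add_mem (hK : IsProperCone K) {x y : Fin m → ℝ} (hx : x ∈ K) (hy : y ∈ K) : x + y ∈ K :=
  hK.2.1 x hx y hy

theorem isClosed (hK : IsProperCone K) : IsClosed K :=
  hK.2.2.1

theorem eq_zero_of_neg_mem (hK : IsProperCone K) {x : Fin m → ℝ} (hx : x ∈ K) (hx' : -x ∈ K) :
    x = 0 :=
  hK.2.2.2.1.subset ⟨hx, hx'⟩

theorem interior_nonempty (hK : IsProperCone K) : (interior K).Nonempty :=
  hK.2.2.2.2

theorem convex (hK : IsProperCone K) : Convex ℝ K :=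
  fun _ hx _ hy _ _ ha hb _ => hK.add_mem (hK.smul_mem ha hx) (hK.smul_mem hb hy)

theorem neg_mem_of_smul_mem (hK : IsProperCone K) {a : ℝ} (ha : a < 0) {x : Fin m → ℝ}
    (hx : a • x ∈ K) : -x ∈ K := by
  have hmem := hK.smul_mem (inv_nonneg.2 (neg_nonneg.2 ha.le)) hx
  rwa [smul_smul, inv_neg, neg_mul, inv_mul_cancel₀ ha.ne, neg_one_smul] at hmem

theorem smul_mem_union_neg (hK : IsProperCone K) (a : ℝ) {x : Fin m → ℝ} (hx : x ∈ K ∪ -K) :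
    a • x ∈ K ∪ -K := by
  have of_mem {y : Fin m → ℝ} (hy : y ∈ K) : a • y ∈ K ∪ -K := by
    rcases le_total 0 a with ha | ha
    · exact .inl (hK.smul_mem ha hy)
    · exact .inr (by simpa using hK.smul_mem (neg_nonneg.2 ha) hy)
  rcases hx with hx | hx
  · exact of_mem hx
  · simpa [or_comm] using of_mem (Set.mem_neg.1 hx)

theorem add_mem_interior (hK : IsProperCone K) {x y : Fin m → ℝ} (hx : x ∈ interior K)
    (hy : y ∈ K) : x + y ∈ interior K := by
  have hsub : (· - y) ⁻¹' interior K ⊆ K := fun z hz => by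
    simpa using hK.add_mem (interior_subset hz) hy
  exact interior_maximal hsub (isOpen_interior.preimage (by fun_prop)) (by simpa using hx)

theorem span_eq_top (hK : IsProperCone K) : Submodule.span ℝ K = ⊤ :=
  Submodule.eq_top_of_nonempty_interior' _
    (hK.interior_nonempty.mono (interior_mono Submodule.subset_span))

theorem matrix_eq_zero (hK : IsProperCone K) {ι : Type*} {A : Matrix ι (Fin m) ℝ}
    (hA : ∀ x ∈ K, A *ᵥ x = 0) : A = 0 :=
  mulVec_injective (congrArg DFunLike.coe
    (LinearMap.ext_on (f := A.mulVecLin) (g := (0 : Matrix ι (Fin m) ℝ).mulVecLin) hK.span_eq_top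
      fun x hx => by simpa using hA x hx))

theorem mem_interior_or_neg_mem_interior (hK : IsProperCone K) {w : Fin m → ℝ} (hw0 : w ≠ 0)
    (hw : w ∈ interior (K ∪ -K)) : w ∈ interior K ∨ -w ∈ interior K := by
  have mem_interior {y : Fin m → ℝ} (hy0 : y ≠ 0) (hyK : y ∈ K) (hy : y ∈ interior (K ∪ -K)) :
      y ∈ interior K := by
    have hsub : interior (K ∪ -K) ∩ (-K)ᶜ ⊆ K :=
      fun z hz => (interior_subset hz.1).resolve_right hz.2
    exact interior_maximal hsub (isOpen_interior.inter hK.isClosed.neg.isOpen_compl)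
      ⟨hy, fun hy' => hy0 (hK.eq_zero_of_neg_mem hyK hy')⟩
  rcases interior_subset hw with hwK | hwK
  · exact .inl (mem_interior hw0 hwK hw)
  · refine .inr (mem_interior (neg_ne_zero.2 hw0) hwK ?_)
    have hsymm : Homeomorph.neg (Fin m → ℝ) ⁻¹' (K ∪ -K) = K ∪ -K := by
      ext
      simp [or_comm]
    rw [← hsymm, ← Homeomorph.preimage_interior]
    simpa using hw

end IsProperCone

theorem dotProduct_pos_of_mem_interior {f w : Fin m → ℝ} (hf0 : f ≠ 0)
    (hf : ∀ x ∈ K, 0 ≤ f ⬝ᵥ x) (hw : w ∈ interior K) : 0 < f ⬝ᵥ w := by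
  have hsurj : Function.Surjective (dotProductEquiv ℝ (Fin m) f) :=
    LinearMap.surjective (by simpa using hf0)
  have hopen := LinearMap.isOpenMap_of_finiteDimensional _ hsurj
  have himage : f ⬝ᵥ w ∈ interior (Set.Ici (0 : ℝ)) :=
    interior_maximal (Set.image_subset_iff.2 fun x hx => hf x (interior_subset hx))
      (hopen _ isOpen_interior) ⟨w, hw, rfl⟩
  simpa using himage

namespace IsProperCone

theorem dotProduct_nonneg_iff (hK : IsProperCone K) {u f : Fin m → ℝ} (hu : u ∈ K)
    (hfu : f ⬝ᵥ u = 1) :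
    (∀ x ∈ K, 0 ≤ f ⬝ᵥ x) ↔ ∀ w, w ≠ 0 → f ⬝ᵥ w = 0 → w ∉ interior (K ∪ -K) := by
  constructor
  · intro hf w hw0 hfw hw
    have hf0 : f ≠ 0 := by
      rintro rfl
      simp at hfu
    rcases hK.mem_interior_or_neg_mem_interior hw0 hw with hw | hw
    · simpa [hfw] using dotProduct_pos_of_mem_interior hf0 hf hw
    · simpa [hfw] using dotProduct_pos_of_mem_interior hf0 hf hw
  · intro hker
    have hint : interior K ⊆ {x | 0 ≤ f ⬝ᵥ x} := by
      intro x hx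
      by_contra hx'
      have hneg : f ⬝ᵥ x < 0 := not_le.1 hx'
      have hu' : (-(f ⬝ᵥ x)) • u ∈ K := hK.smul_mem (by linarith) hu
      -- The point where the ray from `x` in direction `u` crosses `ker f`.
      have hw : x + (-(f ⬝ᵥ x)) • u ∈ interior K := hK.add_mem_interior hx hu'
      refine hker _ (fun hw0 => ?_) (by simp [hfu])
        (interior_mono Set.subset_union_left hw)
      have hx0 : x = 0 := hK.eq_zero_of_neg_mem (interior_subset hx)
        (by rwa [← eq_neg_of_add_eq_zero_right hw0])
      simp [hx0] at hneg
    have hclosed : IsClosed {x | 0 ≤ f ⬝ᵥ x} := isClosed_le continuous_const (by fun_prop)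
    rw [← hK.isClosed.closure_eq,
      ← hK.convex.closure_interior_eq_closure_of_nonempty_interior hK.interior_nonempty]
    exact closure_minimal hint hclosed

end IsProperCone

end ProperCones

section InvariantCones

open Matrix Filter Topology

variable {m : ℕ} {K : Set (Fin m → ℝ)}

theorem invariantUnder_vecMulVec_iff_of_mem (hK : IsProperCone K) {u f : Fin m → ℝ} (hu : u ∈ K)
    (hfu : f ⬝ᵥ u = 1) :
    InvariantUnder (vecMulVec u f) K ↔ ∀ w, w ≠ 0 → f ⬝ᵥ w = 0 → w ∉ interior (K ∪ -K) := by
  rw [← hK.dotProduct_nonneg_iff hu hfu]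
  simp only [InvariantUnder, vecMulVec_mulVec, op_smul_eq_smul]
  refine ⟨fun hP x hx => ?_, fun hf x hx => hK.smul_mem (hf x hx) hu⟩
  by_contra! hneg
  have hu' : -u ∈ K := hK.neg_mem_of_smul_mem hneg (hP x hx)
  simp [hK.eq_zero_of_neg_mem hu hu'] at hfu

theorem invariantUnder_vecMulVec_iff (hK : IsProperCone K) {u f : Fin m → ℝ}
    (hfu : f ⬝ᵥ u = 1) :
    InvariantUnder (vecMulVec u f) K ↔
      u ∈ K ∪ -K ∧ ∀ w, w ≠ 0 → f ⬝ᵥ w = 0 → w ∉ interior (K ∪ -K) := by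
  have range_mem (hP : InvariantUnder (vecMulVec u f) K) : u ∈ K ∪ -K := by
    have hP0 : vecMulVec u f ≠ 0 := by
      rw [Ne, vecMulVec_eq_zero]
      rintro (rfl | rfl) <;> simp at hfu
    obtain ⟨x, hx, hPx⟩ : ∃ x ∈ K, vecMulVec u f *ᵥ x ≠ 0 := by
      by_contra! h
      exact hP0 (hK.matrix_eq_zero h)
    have hux := hP x hx
    rw [vecMulVec_mulVec, op_smul_eq_smul] at hux hPx
    simpa [smul_smul, left_ne_zero_of_smul hPx] using
      hK.smul_mem_union_neg (f ⬝ᵥ x)⁻¹ (.inl hux)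
  rw [← and_iff_right_of_imp range_mem]
  refine and_congr_right fun hu => ?_
  rcases hu with hu | hu
  · exact invariantUnder_vecMulVec_iff_of_mem hK hu hfu
  · simpa [neg_vecMulVec, vecMulVec_neg] using
      invariantUnder_vecMulVec_iff_of_mem hK (f := -f) hu (by simpa using hfu)

theorem invariantUnder_smul_one_add_smul_iff (hK : IsProperCone K)
    {P : Matrix (Fin m) (Fin m) ℝ} (hP : IsIdempotentElem P) {a b : ℝ} (ha : 0 ≤ a) (hb : 0 < b) :
    InvariantUnder (a • 1 + b • P) K ↔ InvariantUnder P K := by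
  have hmul (x : Fin m → ℝ) : (a • 1 + b • P) *ᵥ x = a • x + b • P *ᵥ x := by
    rw [add_mulVec, smul_mulVec, smul_mulVec, one_mulVec]
  refine ⟨fun hA x hx => ?_, fun hPK x hx => ?_⟩
  · set r := a / (a + b) with hr
    have orbit_mem (k : ℕ) : P *ᵥ x + r ^ k • (x - P *ᵥ x) ∈ K := by
      induction k with
      | zero => simpa using hx
      | succ k ih =>
        have hPP : P *ᵥ P *ᵥ x = P *ᵥ x := by rw [mulVec_mulVec, hP.eq]
        convert hK.smul_mem (inv_nonneg.2 (add_nonneg ha hb.le)) (hA _ ih) using 1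
        rw [hmul, mulVec_add, mulVec_smul, mulVec_sub, hPP, sub_self, pow_succ', hr]
        match_scalars <;> field_simp
        ring
    have hpow : Tendsto (fun k : ℕ => r ^ k) atTop (𝓝 0) :=
      tendsto_pow_atTop_nhds_zero_of_lt_one (by positivity)
        ((div_lt_one (by positivity)).2 (by linarith))
    have horbit : Tendsto (fun k : ℕ => P *ᵥ x + r ^ k • (x - P *ᵥ x)) atTop (𝓝 (P *ᵥ x)) := by
      simpa using (hpow.smul_const (x - P *ᵥ x)).const_add (P *ᵥ x)
    exact hK.isClosed.mem_of_tendsto horbit (.of_forall orbit_mem)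
  · rw [hmul]
    exact hK.add_mem (hK.smul_mem ha hx) (hK.smul_mem hb.le (hPK x hx))

theorem mulVec_mulVec_fin_two {R : Type*} [CommRing R] [Nontrivial R]
    (A : Matrix (Fin 2) (Fin 2) R) (x : Fin 2 → R) :
    A *ᵥ A *ᵥ x = A.trace • A *ᵥ x - A.det • x := by
  have hA := aeval_self_charpoly A
  rw [charpoly_fin_two] at hA
  simp only [map_add, map_sub, map_mul, map_pow, Polynomial.aeval_X, Polynomial.aeval_C] at hA
  have hx := congrArg (· *ᵥ x) hA
  simp only [add_mulVec, sub_mulVec, zero_mulVec, sq, ← mulVec_mulVec,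
    Algebra.algebraMap_eq_smul_one, smul_mulVec, one_mulVec] at hx
  rw [← sub_eq_zero, ← hx]
  abel

theorem trace_nonneg_of_invariantUnder {K : Set (Fin 2 → ℝ)} (hK : IsProperCone K)
    {A : Matrix (Fin 2) (Fin 2) ℝ} (hA : InvariantUnder A K) (hdet : 0 ≤ A.det) :
    0 ≤ A.trace := by
  by_contra! htr
  have mulVec_eq_zero (x) (hx : x ∈ K) : A *ᵥ x = 0 := by
    have hmem := hK.add_mem (hA _ (hA x hx)) (hK.smul_mem hdet hx)
    rw [mulVec_mulVec_fin_two, sub_add_cancel] at hmem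
    exact hK.eq_zero_of_neg_mem (hA x hx) (hK.neg_mem_of_smul_mem htr hmem)
  simp [hK.matrix_eq_zero mulVec_eq_zero] at htr

end InvariantCones

/-- The matrix acting as `l` on `u` and as `m` on the hyperplane `f ⬝ᵥ x = 0`, when `f ⬝ᵥ u = 1`.
Every diagonalizable real `2 × 2` matrix with eigenvalues `m ≤ l` has this form, and then `u` spans
a dominant eigenline, `f` cuts out a complementary one, and `vecMulVec u f` is the spectral
projection between them. -/
def spectralForm {n : ℕ} (l m : ℝ) (u f : Fin n → ℝ) : Matrix (Fin n) (Fin n) ℝ :=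
  m • 1 + (l - m) • Matrix.vecMulVec u f

section SpectralForm

open Matrix

variable {n : ℕ} {l m : ℝ}

theorem spectralForm_mulVec (u f x : Fin n → ℝ) :
    spectralForm l m u f *ᵥ x = m • x + ((l - m) * (f ⬝ᵥ x)) • u := by
  rw [spectralForm, add_mulVec, smul_mulVec, smul_mulVec, one_mulVec, vecMulVec_mulVec,
    op_smul_eq_smul, smul_smul]

theorem mul_spectralForm_mul {P Q : Matrix (Fin n) (Fin n) ℝ} (hPQ : P * Q = 1)
    (u f : Fin n → ℝ) : P * spectralForm l m u f * Q = spectralForm l m (P *ᵥ u) (f ᵥ* Q) := by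
  simp only [spectralForm, mul_add, add_mul, mul_smul_comm, smul_mul_assoc, mul_one, hPQ,
    mul_vecMulVec, vecMulVec_mul]

theorem spectralForm_mulVec_eq_smul_iff (hlm : m ≠ l) {u f w : Fin n → ℝ} :
    spectralForm l m u f *ᵥ w = l • w ↔ w = (f ⬝ᵥ w) • u := by
  have hsub : l • w - spectralForm l m u f *ᵥ w = (l - m) • (w - (f ⬝ᵥ w) • u) := by
    rw [spectralForm_mulVec]
    module
  rw [eq_comm, ← sub_eq_zero, hsub, smul_eq_zero_iff_right (sub_ne_zero.2 hlm.symm), sub_eq_zero]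

theorem dotProduct_spectralForm_mulVec {u f : Fin n → ℝ} (hfu : f ⬝ᵥ u = 1) (x : Fin n → ℝ) :
    f ⬝ᵥ spectralForm l m u f *ᵥ x = l * (f ⬝ᵥ x) := by
  rw [spectralForm_mulVec, dotProduct_add, dotProduct_smul, dotProduct_smul, hfu, smul_eq_mul,
    smul_eq_mul]
  ring

theorem invariantUnder_spectralForm_iff {K : Set (Fin n → ℝ)} (hK : IsProperCone K)
    {u f : Fin n → ℝ} (hfu : f ⬝ᵥ u = 1) (hm : 0 ≤ m) (hlm : m < l) :
    InvariantUnder (spectralForm l m u f) K ↔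
      u ∈ K ∪ -K ∧ ∀ w, w ≠ 0 → f ⬝ᵥ w = 0 → w ∉ interior (K ∪ -K) := by
  have hidem : IsIdempotentElem (vecMulVec u f) := by
    rw [IsIdempotentElem, vecMulVec_mul_vecMulVec, hfu, one_smul]
  rw [spectralForm, invariantUnder_smul_one_add_smul_iff hK hidem hm (sub_pos.2 hlm),
    invariantUnder_vecMulVec_iff hK hfu]

variable {u f : Fin 2 → ℝ}

theorem trace_spectralForm (hfu : f ⬝ᵥ u = 1) : (spectralForm l m u f).trace = l + m := by
  rw [spectralForm, trace_add, trace_smul, trace_smul, trace_one, trace_vecMulVec,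
    dotProduct_comm, hfu, Fintype.card_fin, smul_eq_mul, smul_eq_mul]
  push_cast
  ring

theorem det_spectralForm (hfu : f ⬝ᵥ u = 1) : (spectralForm l m u f).det = l * m := by
  rw [dotProduct, Fin.sum_univ_two] at hfu
  simp only [spectralForm, det_fin_two, Matrix.add_apply, Matrix.smul_apply, one_apply,
    vecMulVec_apply, smul_eq_mul, Fin.isValue, reduceIte, zero_ne_one, one_ne_zero]
  linear_combination m * (l - m) * hfu

theorem trace_sq_sub_four_mul_det_spectralForm (hfu : f ⬝ᵥ u = 1) :
    (spectralForm l m u f).trace ^ 2 - 4 * (spectralForm l m u f).det = (l - m) ^ 2 := by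
  rw [trace_spectralForm hfu, det_spectralForm hfu]
  ring

theorem rho2_spectralForm (hfu : f ⬝ᵥ u = 1) (hml : m ≤ l) : rho2 (spectralForm l m u f) = l := by
  rw [rho2, trace_sq_sub_four_mul_det_spectralForm hfu, trace_spectralForm hfu,
    Real.sqrt_sq (sub_nonneg.2 hml)]
  ring

theorem not_scalar_spectralForm (hfu : f ⬝ᵥ u = 1) (hml : m ≠ l) :
    ¬ ∃ c : ℝ, spectralForm l m u f = c • (1 : Matrix (Fin 2) (Fin 2) ℝ) := by
  rintro ⟨c, hc⟩
  have hdisc := trace_sq_sub_four_mul_det_spectralForm (l := l) (m := m) hfu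
  have hsq : (l - m) ^ 2 = 0 := by
    rw [← hdisc, hc]
    simp only [trace_smul, trace_one, det_smul, det_one, Fintype.card_fin, smul_eq_mul]
    push_cast
    ring
  exact hml (sub_eq_zero.1 (pow_eq_zero_iff two_ne_zero |>.1 hsq)).symm

theorem domEigvec_spectralForm_iff (hfu : f ⬝ᵥ u = 1) (hml : m < l) {w : Fin 2 → ℝ} :
    DomEigvec (spectralForm l m u f) w ↔ w ≠ 0 ∧ w = (f ⬝ᵥ w) • u := by
  rw [DomEigvec, rho2_spectralForm hfu hml.le, spectralForm_mulVec_eq_smul_iff hml.ne]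

theorem nonDomEigvec_spectralForm_iff (hfu : f ⬝ᵥ u = 1) (hml : m < l) {w : Fin 2 → ℝ} :
    NonDomEigvec (spectralForm l m u f) w ↔ w ≠ 0 ∧ f ⬝ᵥ w = 0 := by
  rw [NonDomEigvec, rho2_spectralForm hfu hml.le]
  constructor
  · rintro ⟨μ, hμ, hw0, hw⟩
    have hf := dotProduct_spectralForm_mulVec (l := l) (m := m) hfu w
    rw [hw, dotProduct_smul, smul_eq_mul] at hf
    exact ⟨hw0, (mul_eq_mul_right_iff.1 hf).resolve_left hμ⟩
  · rintro ⟨hw0, hfw⟩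
    exact ⟨m, hml.ne, hw0, by rw [spectralForm_mulVec, hfw, mul_zero, zero_smul, add_zero]⟩

theorem IsDiagonalizable.exists_eq_spectralForm {A : Matrix (Fin 2) (Fin 2) ℝ}
    (hA : IsDiagonalizable A) :
    ∃ (l m : ℝ) (u f : Fin 2 → ℝ), m ≤ l ∧ f ⬝ᵥ u = 1 ∧ A = spectralForm l m u f := by
  obtain ⟨P, hP, hD⟩ := hA
  set d := (P⁻¹ * A * P).diag
  have hAd : A = P * diagonal d * P⁻¹ := by
    rw [hD.diagonal_diag, mul_assoc P⁻¹, mul_nonsing_inv_cancel_left _ _ hP,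
      mul_nonsing_inv_cancel_right _ _ hP]
  obtain ⟨i, j, hij, hle⟩ : ∃ i j : Fin 2, i ≠ j ∧ d j ≤ d i := by
    rcases le_total (d 1) (d 0) with hle | hle
    · exact ⟨0, 1, zero_ne_one, hle⟩
    · exact ⟨1, 0, one_ne_zero, hle⟩
  have hd : diagonal d = spectralForm (d i) (d j) (Pi.single i 1) (Pi.single i 1) := by
    rw [spectralForm, ← single_eq_single_vecMulVec_single]
    ext a b
    fin_cases i <;> fin_cases j <;> fin_cases a <;> fin_cases b <;> simp_all
  refine ⟨d i, d j, P *ᵥ Pi.single i 1, Pi.single i 1 ᵥ* P⁻¹, hle, ?_, ?_⟩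
  · rw [dotProduct_mulVec, vecMul_vecMul, nonsing_inv_mul _ hP, vecMul_one,
      single_one_dotProduct, Pi.single_eq_same]
  · rw [← mul_spectralForm_mul (mul_nonsing_inv _ hP), ← hd, hAd]

theorem invariantUnder_iff_of_isVandergraft {K : Set (Fin 2 → ℝ)} (hK : IsProperCone K)
    {A : Matrix (Fin 2) (Fin 2) ℝ} (hdiag : IsDiagonalizable A) (hdet : 0 ≤ A.det)
    (hV : IsVandergraft A) :
    InvariantUnder A K ↔
      ((¬ ∃ c : ℝ, A = c • (1 : Matrix (Fin 2) (Fin 2) ℝ)) →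
        ∀ u, DomEigvec A u → u ∈ K ∪ -K) ∧
      ∀ v, NonDomEigvec A v → v ∉ interior (K ∪ -K) := by
  obtain ⟨l, m, u, f, hml, hfu, rfl⟩ := hdiag.exists_eq_spectralForm
  have htr := hV.2
  rw [trace_spectralForm hfu] at htr
  rw [det_spectralForm hfu] at hdet
  have hm : 0 ≤ m := by
    by_contra! hm
    linarith [nonpos_of_mul_nonneg_left hdet hm]
  rcases hml.eq_or_lt with rfl | hlt
  · have hscalar : spectralForm m m u f = m • 1 := by
      rw [spectralForm, sub_self, zero_smul, add_zero]
    have hinv : InvariantUnder (spectralForm m m u f) K := fun x hx => by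
      simpa only [hscalar, smul_mulVec, one_mulVec] using hK.smul_mem hm hx
    have not_nonDomEigvec (w : Fin 2 → ℝ) : ¬ NonDomEigvec (spectralForm m m u f) w := by
      rintro ⟨μ, hμ, hw0, hw⟩
      rw [rho2_spectralForm hfu le_rfl] at hμ
      rw [hscalar, smul_mulVec, one_mulVec] at hw
      exact hμ (smul_left_injective ℝ hw0 hw).symm
    exact iff_of_true hinv
      ⟨fun hns => (hns ⟨m, hscalar⟩).elim, fun w hw => (not_nonDomEigvec w hw).elim⟩
  · have hu0 : u ≠ 0 := by
      rintro rfl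
      simp at hfu
    have hdom : (∀ w, DomEigvec (spectralForm l m u f) w → w ∈ K ∪ -K) ↔ u ∈ K ∪ -K := by
      simp only [domEigvec_spectralForm_iff hfu hlt]
      refine ⟨fun h => h u ⟨hu0, by rw [hfu, one_smul]⟩, fun hu w hw => ?_⟩
      rw [hw.2]
      exact hK.smul_mem_union_neg _ hu
    rw [invariantUnder_spectralForm_iff hK hfu hm hlt, ← hdom,
      imp_iff_right (not_scalar_spectralForm hfu hlt.ne)]
    simp only [nonDomEigvec_spectralForm_iff hfu hlt, and_imp]

theorem isVandergraft_of_invariantUnder {K : Set (Fin 2 → ℝ)} (hK : IsProperCone K)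
    {A : Matrix (Fin 2) (Fin 2) ℝ} (hdiag : IsDiagonalizable A) (hdet : 0 ≤ A.det)
    (hA : InvariantUnder A K) : IsVandergraft A := by
  refine ⟨?_, trace_nonneg_of_invariantUnder hK hA hdet⟩
  obtain ⟨l, m, u, f, -, hfu, rfl⟩ := hdiag.exists_eq_spectralForm
  rw [ge_iff_le, ← sub_nonneg, trace_sq_sub_four_mul_det_spectralForm hfu]
  positivity

end SpectralForm

theorem common_invariant_cone_diagonalizable_nonneg_det_general
    {ι : Type*} (A : ι → Matrix (Fin 2) (Fin 2) ℝ)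
    (hdiag : ∀ j, IsDiagonalizable (A j))
    (hdet : ∀ j, 0 ≤ (A j).det) :
    (∃ K : Set (Fin 2 → ℝ), IsProperCone K ∧ ∀ j, InvariantUnder (A j) K) ↔
      ((∀ j, IsVandergraft (A j)) ∧
        ∃ C : Set (Fin 2 → ℝ), IsProperCone C ∧
          (∀ j, (¬ ∃ c : ℝ, A j = c • (1 : Matrix (Fin 2) (Fin 2) ℝ)) →
            ∀ u, DomEigvec (A j) u → u ∈ C ∪ (-C)) ∧
          (∀ j, ∀ v, NonDomEigvec (A j) v → v ∉ interior (C ∪ (-C)))) := by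
  constructor
  · rintro ⟨K, hK, hA⟩
    have hV j : IsVandergraft (A j) :=
      isVandergraft_of_invariantUnder hK (hdiag j) (hdet j) (hA j)
    have hsep j := (invariantUnder_iff_of_isVandergraft hK (hdiag j) (hdet j) (hV j)).1 (hA j)
    exact ⟨hV, K, hK, fun j => (hsep j).1, fun j => (hsep j).2⟩
  · rintro ⟨hV, C, hC, hdom, hnondom⟩
    exact ⟨C, hC, fun j =>
      (invariantUnder_iff_of_isVandergraft hC (hdiag j) (hdet j) (hV j)).2 ⟨hdom j, hnondom j⟩⟩

/-- Theorem: a finite family of diagonalizable real `2×2` matrices with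
nonnegative determinants has a common invariant proper cone iff all the
matrices are Vandergraft and the dominant eigenvectors can be separated
from the non-dominant ones by a proper cone `C`. -/
theorem common_invariant_cone_diagonalizable_nonneg_det
    (n : ℕ) (A : Fin n → Matrix (Fin 2) (Fin 2) ℝ)
    (hdiag : ∀ j, IsDiagonalizable (A j))
    (hdet : ∀ j, 0 ≤ (A j).det) :
    (∃ K : Set (Fin 2 → ℝ), IsProperCone K ∧ ∀ j, InvariantUnder (A j) K) ↔
      ((∀ j, IsVandergraft (A j)) ∧
        ∃ C : Set (Fin 2 → ℝ), IsProperCone C ∧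
          (∀ j, (¬ ∃ c : ℝ, A j = c • (1 : Matrix (Fin 2) (Fin 2) ℝ)) →
            ∀ u, DomEigvec (A j) u → u ∈ C ∪ (-C)) ∧
          (∀ j, ∀ v, NonDomEigvec (A j) v → v ∉ interior (C ∪ (-C)))) :=
  common_invariant_cone_diagonalizable_nonneg_det_general A hdiag hdet
end

section
/- Let 𝒜 = {A₁,…,Aₙ} be a finite family of diagonalizable real 2×2 Vandergraft matrices with nonnegative determinants. If every four matrices of 𝒜 have a common invariant proper cone, then there exists a proper cone invariant under every matrix of 𝒜. Moreover, if at most one pair of matrices in 𝒜 is simultaneously diagonalizable (i.e., diagonalizable by a common invertible matrix), then the same conclusion already follows if every three matrices of 𝒜 have a common invariant proper cone. -/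
/-- `A` and `B` are simultaneously diagonalizable (by a common real
invertible matrix). -/
def SimDiag (A B : Matrix (Fin 2) (Fin 2) ℝ) : Prop :=
  ∃ P : Matrix (Fin 2) (Fin 2) ℝ, IsUnit P.det ∧
    (P⁻¹ * A * P).IsDiag ∧ (P⁻¹ * B * P).IsDiag

/-!
A nonscalar matrix of the family has the form `A = b • 1 + p fᵀ` with `0 ≤ b` and `0 < f ⬝ᵥ p`, so
its iterates, suitably rescaled, attract a vector `x` to `(f ⬝ᵥ x) • p`. An invariant proper cone
`K` therefore contains `p` or `-p`, and after the corresponding choice of sign `f` is nonnegative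
on `K`. Conversely, if `f i ⬝ᵥ p j ≥ 0` for all `i, j`, then a proper cone can be squeezed between
the cone spanned by the `p j` and the cone on which all `f i` are nonnegative. Hence a common
invariant proper cone exists if and only if the matrix `M i j = f i ⬝ᵥ p j` becomes nonnegative
after conjugation by a diagonal sign matrix, i.e. if and only if the signed graph of `M` is
balanced.

Whether this graph is balanced is decided on small vertex sets because it is very dense: in the
plane, `A i` and `A j` are nonadjacent exactly when `p j` spans the kernel of `f i` and vice versa,
so that paths of nonadjacent vertices of length three close up to a cycle. It follows that every
vertex is adjacent to one of at most two hubs, and the signs can be read off along the edges leaving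
these hubs.
-/

open Filter Matrix Topology

section Balance

variable {ι R : Type*} [AddCommGroup R] {M : Matrix ι ι R} {i j k l : ι} {s t u : ℤˣ}

/-- Adjacency in the graph of the nonzero pattern of `M`, with orientation forgotten. -/
def Linked (M : Matrix ι ι R) (i j : ι) : Prop :=
  M i j ≠ 0 ∨ M j i ≠ 0

lemma Linked.symm (h : Linked M i j) : Linked M j i := Or.symm h

lemma linked_self_iff : Linked M i i ↔ M i i ≠ 0 := or_self_iff

lemma not_linked_iff : ¬ Linked M i j ↔ M i j = 0 ∧ M j i = 0 := by
  simp only [Linked, not_or, not_not]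

variable [PartialOrder R]

/-- The matrix `M` is balanced if it is similar, via a diagonal matrix of signs, to a nonnegative
matrix. Equivalently, the signed graph of `M` is balanced in the sense of Harary. -/
def IsBalanced (M : Matrix ι ι R) : Prop :=
  ∃ e : ι → ℤˣ, ∀ i j, 0 ≤ (e i * e j) • M i j

/-- `s` is an admissible value for the product of the signs at `i` and `j` of a diagonal sign
matrix witnessing that `M` is balanced. For unlinked `i` and `j` both signs are admissible. -/
def IsLinkSign (M : Matrix ι ι R) (i j : ι) (s : ℤˣ) : Prop :=
  0 ≤ s • M i j ∧ 0 ≤ s • M j i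

lemma IsLinkSign.symm (h : IsLinkSign M i j s) : IsLinkSign M j i s := And.symm h

lemma isLinkSign_of_not_linked (h : ¬ Linked M i j) (s : ℤˣ) : IsLinkSign M i j s := by
  obtain ⟨hij, hji⟩ := not_linked_iff.1 h
  simp [IsLinkSign, hij, hji]

lemma isBalanced_iff_isLinkSign :
    IsBalanced M ↔ ∃ e : ι → ℤˣ, ∀ i j, IsLinkSign M i j (e i * e j) :=
  exists_congr fun e =>
    ⟨fun h i j => ⟨h i j, mul_comm (e i) (e j) ▸ h j i⟩, fun h i j => (h i j).1⟩

lemma exists_isLinkSign (h : ∀ φ : Fin 3 → ι, IsBalanced (M.submatrix φ φ)) (i j : ι) :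
    ∃ s, IsLinkSign M i j s := by
  obtain ⟨e, he⟩ := isBalanced_iff_isLinkSign.1 (h ![i, j, j])
  exact ⟨_, he 0 1⟩

variable [IsOrderedAddMonoid R]

lemma eq_zero_of_units_smul_nonneg {x : R} (hst : s ≠ t) (hs : 0 ≤ s • x) (ht : 0 ≤ t • x) :
    x = 0 := by
  rcases Int.units_eq_one_or s with rfl | rfl <;> rcases Int.units_eq_one_or t with rfl | rfl <;>
    simp_all [Units.smul_def, le_antisymm_iff]

lemma IsLinkSign.unique (hs : IsLinkSign M i j s) (ht : IsLinkSign M i j t) (h : Linked M i j) :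
    s = t := by
  by_contra hst
  exact h.elim (· <| eq_zero_of_units_smul_nonneg hst hs.1 ht.1)
    (· <| eq_zero_of_units_smul_nonneg hst hs.2 ht.2)

lemma isLinkSign_mul_of_triangle (h : IsBalanced (M.submatrix ![k, i, j] ![k, i, j]))
    (hi : Linked M k i) (hj : Linked M k j) (hs : IsLinkSign M k i s) (ht : IsLinkSign M k j t) :
    IsLinkSign M i j (s * t) := by
  obtain ⟨e, he⟩ := isBalanced_iff_isLinkSign.1 h
  rw [hs.unique (he 0 1) hi, ht.unique (he 0 2) hj, mul_mul_mul_comm, Int.units_mul_self, one_mul]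
  exact he 1 2

lemma isLinkSign_mul_of_path (h : IsBalanced (M.submatrix ![k, l, i, j] ![k, l, i, j]))
    (hkl : Linked M k l) (hi : Linked M k i) (hj : Linked M l j) (hs : IsLinkSign M k i s)
    (ht : IsLinkSign M k l t) (hu : IsLinkSign M l j u) : IsLinkSign M i j (s * (t * u)) := by
  obtain ⟨e, he⟩ := isBalanced_iff_isLinkSign.1 h
  have hsigns : e 0 * e 2 * (e 0 * e 1 * (e 1 * e 3)) = e 2 * e 3 :=
    calc e 0 * e 2 * (e 0 * e 1 * (e 1 * e 3)) = e 0 * e 0 * (e 1 * e 1) * (e 2 * e 3) := by ac_rfl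
      _ = e 2 * e 3 := by simp only [Int.units_mul_self, one_mul]
  rw [hs.unique (he 0 2) hi, ht.unique (he 0 1) hkl, hu.unique (he 1 3) hj]
  exact hsigns ▸ he 2 3

section Local

variable (h₃ : ∀ φ : Fin 3 → ι, IsBalanced (M.submatrix φ φ)) {σ : ι → ι → ℤˣ}
  (hσ : ∀ i j, IsLinkSign M i j (σ i j)) {r t : ι}
include h₃ hσ

lemma isBalanced_of_two_hubs (τ : ℤˣ) (ht : ∀ j, ¬ Linked M r j → Linked M t j)
    (hrt : ∀ i j, Linked M r i → ¬ Linked M r j → IsLinkSign M i j (σ r i * (τ * σ t j))) :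
    IsBalanced M := by
  classical
  refine isBalanced_iff_isLinkSign.2
    ⟨fun i => if Linked M r i then σ r i else τ * σ t i, fun i j => ?_⟩
  by_cases hi : Linked M r i <;> by_cases hj : Linked M r j <;>
    simp only [hi, hj, if_true, if_false]
  · exact isLinkSign_mul_of_triangle (h₃ _) hi hj (hσ r i) (hσ r j)
  · exact hrt i j hi hj
  · exact mul_comm (σ r j) _ ▸ (hrt j i hj hi).symm
  · rw [mul_mul_mul_comm, Int.units_mul_self, one_mul]
    exact isLinkSign_mul_of_triangle (h₃ _) (ht i hi) (ht j hj) (hσ t i) (hσ t j)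

lemma isBalanced_of_hub (hr : ∀ i, Linked M r i) : IsBalanced M :=
  isBalanced_of_two_hubs h₃ hσ (t := r) 1 (fun j _ => hr j) fun _ j _ hj => (hj (hr j)).elim

end Local

theorem isBalanced_of_forall_fin_four (hM : ∀ i, M i i ≠ 0)
    (hpath : ∀ i j k l, ¬ Linked M i j → ¬ Linked M j k → ¬ Linked M k l → ¬ Linked M i l)
    (h₄ : ∀ φ : Fin 4 → ι, IsBalanced (M.submatrix φ φ)) : IsBalanced M := by
  have h₃ (φ : Fin 3 → ι) : IsBalanced (M.submatrix φ φ) := by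
    obtain ⟨e, he⟩ := h₄ (Fin.snoc φ (φ 0))
    exact ⟨e ∘ Fin.castSucc, fun i j => by simpa using he i.castSucc j.castSucc⟩
  choose σ hσ using exists_isLinkSign h₃
  rcases isEmpty_or_nonempty ι with _ | ⟨⟨r⟩⟩
  · exact ⟨fun _ => 1, fun i => isEmptyElim i⟩
  by_cases hr : ∀ i, Linked M r i
  · exact isBalanced_of_hub h₃ hσ hr
  obtain ⟨r', hr'⟩ := not_forall.1 hr
  by_cases ht : ∃ t, Linked M r t ∧ Linked M r' t
  · obtain ⟨t, hrt, hr't⟩ := ht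
    have htj (j) (hj : ¬ Linked M r j) : Linked M t j := by
      contrapose! hr't
      exact hpath r' r j t (mt .symm hr') hj (mt .symm hr't)
    exact isBalanced_of_two_hubs h₃ hσ (σ r t) htj fun i j hi hj =>
      isLinkSign_mul_of_path (h₄ _) hrt hi (htj j hj) (hσ r i) (hσ r t) (hσ t j)
  · push Not at ht
    refine isBalanced_of_two_hubs h₃ hσ (r := r) (t := r') 1 (fun j hj => ?_) fun i j hi hj => ?_
    · by_contra hj'
      exact hpath j r r' j (mt .symm hj) hr' hj' (linked_self_iff.2 (hM j))
    · exact isLinkSign_of_not_linked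
        (hpath i r' r j (mt .symm (ht i hi)) (mt .symm hr') hj) _

theorem isBalanced_of_forall_fin_three
    (hpair : ∀ i j k l, ¬ Linked M i j → ¬ Linked M k l → ({i, j} : Set ι) = {k, l})
    (h₃ : ∀ φ : Fin 3 → ι, IsBalanced (M.submatrix φ φ)) : IsBalanced M := by
  choose σ hσ using exists_isLinkSign h₃
  by_cases hhub : ∃ r, ∀ i, Linked M r i
  · obtain ⟨r, hr⟩ := hhub
    exact isBalanced_of_hub h₃ hσ hr
  push Not at hhub
  -- Two different vertices both lie in the unique unlinked pair, so `M` is diagonal.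
  refine isBalanced_iff_isLinkSign.2 ⟨fun _ => 1, fun i j => ?_⟩
  rcases eq_or_ne i j with rfl | hij
  · obtain ⟨e, he⟩ := isBalanced_iff_isLinkSign.1 (h₃ fun _ => i)
    simpa [IsLinkSign] using he 0 0
  · obtain ⟨i', hi⟩ := hhub i
    obtain ⟨j', hj⟩ := hhub j
    have hmem : j ∈ ({i, i'} : Set ι) := hpair i i' j j' hi hj ▸ Set.mem_insert j {j'}
    obtain rfl : j = i' := (Set.mem_insert_iff.1 hmem).resolve_left hij.symm
    exact isLinkSign_of_not_linked hi _

end Balance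

section RankOneUpdate

variable {n : Type*} [Fintype n] [DecidableEq n]

/-- `A = b • 1 + p fᵀ` with `0 ≤ b` and `0 < f ⬝ᵥ p`: the matrix `A` acts as the scalar `b ≥ 0` on
the hyperplane `f ⬝ᵥ x = 0`, and `p` is an eigenvector for the strictly larger eigenvalue
`b + f ⬝ᵥ p`. -/
structure IsDominantRankOneUpdate (A : Matrix n n ℝ) (b : ℝ) (p f : n → ℝ) : Prop where
  nonneg : 0 ≤ b
  dotProduct_pos : 0 < f ⬝ᵥ p
  eq_add : A = b • 1 + vecMulVec p f

namespace IsDominantRankOneUpdate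

variable {A B : Matrix n n ℝ} {b c : ℝ} {p q f g : n → ℝ}

lemma mulVec_eq (h : IsDominantRankOneUpdate A b p f) (x : n → ℝ) :
    A *ᵥ x = b • x + (f ⬝ᵥ x) • p := by
  rw [h.eq_add, add_mulVec, smul_mulVec, one_mulVec, vecMulVec_mulVec, op_smul_eq_smul]

lemma left_ne_zero (h : IsDominantRankOneUpdate A b p f) : p ≠ 0 := by
  rintro rfl
  simpa using h.dotProduct_pos

lemma right_ne_zero (h : IsDominantRankOneUpdate A b p f) : f ≠ 0 := by
  rintro rfl
  simpa using h.dotProduct_pos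

lemma units_smul (h : IsDominantRankOneUpdate A b p f) (e : ℤˣ) :
    IsDominantRankOneUpdate A b (e • p) (e • f) := by
  rcases Int.units_eq_one_or e with rfl | rfl
  · simpa using h
  · exact ⟨h.nonneg, by simpa [Units.smul_def] using h.dotProduct_pos,
      by simpa [Units.smul_def] using h.eq_add⟩

lemma mulVec_left (h : IsDominantRankOneUpdate A b p f) : A *ᵥ p = (b + f ⬝ᵥ p) • p := by
  rw [h.mulVec_eq, add_smul]

lemma mulVec_of_dotProduct_eq_zero (h : IsDominantRankOneUpdate A b p f) {x : n → ℝ}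
    (hx : f ⬝ᵥ x = 0) : A *ᵥ x = b • x := by
  rw [h.mulVec_eq, hx, zero_smul, add_zero]

end IsDominantRankOneUpdate

lemma isDiag_inv_mul_mul_of_mulVec_col_eq_smul {A P : Matrix n n ℝ} (hP : IsUnit P.det)
    (d : n → ℝ) (hd : ∀ j, A *ᵥ P.col j = d j • P.col j) : (P⁻¹ * A * P).IsDiag := by
  have hAP : A * P = P * diagonal d := by
    ext i j
    rw [mul_diagonal, mul_comm]
    exact congrFun (hd j) i
  rw [Matrix.mul_assoc, hAP, nonsing_inv_mul_cancel_left P _ hP]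
  exact isDiag_diagonal d

lemma isDominantRankOneUpdate_conj_diagonal {P : Matrix n n ℝ} (hP : IsUnit P.det) {d : n → ℝ}
    {b : ℝ} {k : n} (hb : 0 ≤ b) (hk : b < d k) (hd : ∀ j ≠ k, d j = b) :
    IsDominantRankOneUpdate (P * diagonal d * P⁻¹) b (P.col k) ((d k - b) • P⁻¹.row k) where
  nonneg := hb
  dotProduct_pos := by
    have hkk : P⁻¹.row k ⬝ᵥ P.col k = 1 :=
      (congrFun₂ (nonsing_inv_mul P hP) k k).trans (one_apply_eq k)
    simpa [smul_dotProduct, hkk] using hk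
  eq_add := by
    have hdiag : diagonal d = b • 1 + vecMulVec (Pi.single k 1) ((d k - b) • Pi.single k 1) := by
      ext i j
      rcases eq_or_ne i j with rfl | hij
      · rcases eq_or_ne i k with rfl | hik <;> simp [vecMulVec_apply, *]
      · rcases eq_or_ne i k with rfl | hik <;> simp [vecMulVec_apply, hij.symm, *]
    rw [hdiag, Matrix.mul_add, Matrix.add_mul, Matrix.mul_smul, Matrix.mul_one, Matrix.smul_mul,
      mul_nonsing_inv P hP, mul_vecMulVec, vecMulVec_mul, mulVec_single_one, smul_vecMul,
      single_one_vecMul]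

end RankOneUpdate

section Plane

lemma dotProduct_eq_zero_of_path {K : Type*} [Field K] {f g p q : Fin 2 → K} (hp : p ≠ 0)
    (hg : g ≠ 0) (hfp : f ⬝ᵥ p = 0) (hgp : g ⬝ᵥ p = 0) (hgq : g ⬝ᵥ q = 0) : f ⬝ᵥ q = 0 := by
  have hfg : f 0 * g 1 - f 1 * g 0 = 0 := by
    rw [← det_fin_two_of, ← exists_mulVec_eq_zero_iff]
    refine ⟨p, hp, ?_⟩
    ext i
    fin_cases i
    exacts [hfp, hgp]
  rw [vec2_dotProduct] at hgq ⊢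
  by_contra hfq
  refine hg (funext fun i => (mul_eq_zero.1 ?_).resolve_right hfq)
  fin_cases i <;> dsimp only [Fin.zero_eta, Fin.mk_one]
  · linear_combination f 0 * hgq - q 1 * hfg
  · linear_combination f 1 * hgq + q 0 * hfg

variable {A B : Matrix (Fin 2) (Fin 2) ℝ} {b c : ℝ} {p q f g : Fin 2 → ℝ}

lemma IsDominantRankOneUpdate.simDiag (hA : IsDominantRankOneUpdate A b p f)
    (hB : IsDominantRankOneUpdate B c q g) (hfq : f ⬝ᵥ q = 0) (hgp : g ⬝ᵥ p = 0) :
    SimDiag A B := by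
  have hpq : LinearIndependent ℝ ![p, q] := by
    refine LinearIndependent.pair_iff.2 fun s t hst => ⟨?_, ?_⟩
    · simpa only [dotProduct_add, dotProduct_smul, hfq, smul_eq_mul, mul_zero, add_zero,
        dotProduct_zero, mul_eq_zero, hA.dotProduct_pos.ne', or_false] using
        congrArg (f ⬝ᵥ ·) hst
    · simpa only [dotProduct_add, dotProduct_smul, hgp, smul_eq_mul, mul_zero, zero_add,
        dotProduct_zero, mul_eq_zero, hB.dotProduct_pos.ne', or_false] using
        congrArg (g ⬝ᵥ ·) hst
  have hP : IsUnit ((of ![p, q])ᵀ).det :=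
    (isUnit_iff_isUnit_det _).1 (linearIndependent_cols_iff_isUnit.1 hpq)
  refine ⟨_, hP, isDiag_inv_mul_mul_of_mulVec_col_eq_smul hP ![b + f ⬝ᵥ p, b] ?_,
    isDiag_inv_mul_mul_of_mulVec_col_eq_smul hP ![c, c + g ⬝ᵥ q] ?_⟩
  · exact Fin.forall_fin_two.2 ⟨hA.mulVec_left, hA.mulVec_of_dotProduct_eq_zero hfq⟩
  · exact Fin.forall_fin_two.2 ⟨hB.mulVec_of_dotProduct_eq_zero hgp, hB.mulVec_left⟩

lemma IsDiagonalizable.exists_isDominantRankOneUpdate (hdiag : IsDiagonalizable A)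
    (htr : 0 ≤ A.trace) (hdet : 0 ≤ A.det) (hA : ∀ c : ℝ, A ≠ c • 1) :
    ∃ b p f, IsDominantRankOneUpdate A b p f := by
  obtain ⟨P, hP, hD⟩ := hdiag
  set d := diag (P⁻¹ * A * P)
  have hd : diagonal d = P⁻¹ * A * P := hD.diagonal_diag
  have hAd : A = P * diagonal d * P⁻¹ := by
    rw [hd, Matrix.mul_assoc P⁻¹, mul_nonsing_inv_cancel_left P _ hP,
      mul_nonsing_inv_cancel_right P _ hP]
  have htrace : d 0 + d 1 = A.trace := by
    rw [← Fin.sum_univ_two, ← trace_diagonal, hd, trace_mul_cycle, mul_nonsing_inv P hP,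
      Matrix.one_mul]
  have hprod : d 0 * d 1 = A.det := by
    rw [← Fin.prod_univ_two, ← det_diagonal, hd, det_conj' ((isUnit_iff_isUnit_det P).2 hP)]
  have hd₀ : 0 ≤ d 0 := by nlinarith
  have hd₁ : 0 ≤ d 1 := by nlinarith
  rcases lt_trichotomy (d 0) (d 1) with h | h | h
  · rw [hAd]
    exact ⟨_, _, _, isDominantRankOneUpdate_conj_diagonal hP hd₀ h (by simp [Fin.forall_fin_two])⟩
  · have hscalar : diagonal d = d 0 • 1 := by
      ext i j
      fin_cases i <;> fin_cases j <;> simp [h]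
    refine absurd hAd ?_
    rw [hscalar, Matrix.mul_smul, Matrix.mul_one, Matrix.smul_mul, mul_nonsing_inv P hP]
    exact hA (d 0)
  · rw [hAd]
    exact ⟨_, _, _, isDominantRankOneUpdate_conj_diagonal hP hd₁ h (by simp [Fin.forall_fin_two])⟩

end Plane

section Cone

variable {m : ℕ}

/-- The matrices `A i` leave invariant a common proper cone. -/
def HaveCommonInvariantProperCone {ι : Type*} (A : ι → Matrix (Fin m) (Fin m) ℝ) : Prop :=
  ∃ K : Set (Fin m → ℝ), IsProperCone K ∧ ∀ i, InvariantUnder (A i) K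

variable {K : Set (Fin m → ℝ)} {A : Matrix (Fin m) (Fin m) ℝ} {b : ℝ} {p f : Fin m → ℝ}

lemma isProperCone_Ici_zero (m : ℕ) : IsProperCone (Set.Ici (0 : Fin m → ℝ)) := by
  refine ⟨fun a ha x hx => Set.mem_Ici.2 (smul_nonneg ha hx),
    fun x hx y hy => Set.mem_Ici.2 (add_nonneg hx hy),
    isClosed_Ici, ?_, 1, ?_⟩
  · ext x
    simp [le_antisymm_iff, and_comm]
  · rw [← Set.pi_univ_Ici, interior_pi_set Set.finite_univ]
    simp

-- The norm bound makes the cone pointed.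
lemma isProperCone_setOf_nonneg_and_norm_le {ι : Type*} [Finite ι] {f : ι → Fin m → ℝ} {ε : ℝ}
    {g w : Fin m → ℝ} (hε : 0 < ε) (hfw : ∀ i, 0 < f i ⬝ᵥ w) (hgw : ε * ‖w‖ < g ⬝ᵥ w) :
    IsProperCone {x | (∀ i, 0 ≤ f i ⬝ᵥ x) ∧ ε * ‖x‖ ≤ g ⬝ᵥ x} := by
  refine ⟨fun a ha x hx => ⟨fun i => ?_, ?_⟩, fun x hx y hy => ⟨fun i => ?_, ?_⟩, ?_, ?_, w, ?_⟩
  · rw [dotProduct_smul]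
    exact smul_nonneg ha (hx.1 i)
  · rw [dotProduct_smul, norm_smul, Real.norm_of_nonneg ha, mul_left_comm]
    exact mul_le_mul_of_nonneg_left hx.2 ha
  · rw [dotProduct_add]
    exact add_nonneg (hx.1 i) (hy.1 i)
  · calc ε * ‖x + y‖ ≤ ε * ‖x‖ + ε * ‖y‖ := by rw [← mul_add]; gcongr; exact norm_add_le x y
      _ ≤ g ⬝ᵥ (x + y) := by rw [dotProduct_add]; exact add_le_add hx.2 hy.2
  · simp only [Set.ofPred_and, Set.ofPred_forall]
    exact (isClosed_iInter fun i => isClosed_le (by fun_prop) (by fun_prop)).inter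
      (isClosed_le (by fun_prop) (by fun_prop))
  · refine Set.Subset.antisymm (fun x ⟨hx, hnx⟩ => ?_) (by simp)
    have hle : ε * ‖x‖ ≤ -(g ⬝ᵥ x) := by simpa using hnx.2
    have hnorm : ε * ‖x‖ ≤ 0 := by linarith [hx.2]
    exact norm_le_zero_iff.1 (nonpos_of_mul_nonpos_right hnorm hε)
  · refine mem_interior.2 ⟨{x | (∀ i, 0 < f i ⬝ᵥ x) ∧ ε * ‖x‖ < g ⬝ᵥ x},
      fun x hx => ⟨fun i => (hx.1 i).le, hx.2.le⟩, ?_, hfw, hgw⟩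
    simp only [Set.ofPred_and, Set.ofPred_forall]
    exact (isOpen_iInter_of_finite fun i => isOpen_lt (by fun_prop) (by fun_prop)).inter
      (isOpen_lt (by fun_prop) (by fun_prop))

lemma exists_isProperCone_mem_and_dotProduct_nonneg {ι : Type*} [Finite ι] {p f : ι → Fin m → ℝ}
    (hpos : ∀ i, 0 < f i ⬝ᵥ p i) (hnonneg : ∀ i j, 0 ≤ f i ⬝ᵥ p j) :
    ∃ K, IsProperCone K ∧ (∀ i, p i ∈ K) ∧ ∀ i, ∀ x ∈ K, 0 ≤ f i ⬝ᵥ x := by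
  cases nonempty_fintype ι
  rcases isEmpty_or_nonempty ι with _ | _
  · exact ⟨_, isProperCone_Ici_zero m, isEmptyElim, isEmptyElim⟩
  have hg (j) : 0 < (∑ i, f i) ⬝ᵥ p j := by
    rw [sum_dotProduct]
    exact Finset.sum_pos' (fun i _ => hnonneg i j) ⟨j, Finset.mem_univ j, hpos j⟩
  obtain ⟨ε, hε, hεp⟩ : ∃ ε > 0, ∀ j, ε * ‖p j‖ < (∑ i, f i) ⬝ᵥ p j := by
    have hsmall (j) : ∀ᶠ ε in 𝓝[>] (0 : ℝ), ε * ‖p j‖ < (∑ i, f i) ⬝ᵥ p j := by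
      have hcont : ContinuousAt (fun ε : ℝ => ε * ‖p j‖) 0 := by fun_prop
      exact (hcont.mono_left nhdsWithin_le_nhds).eventually_lt_const (by simpa using hg j)
    exact (eventually_mem_nhdsWithin.and (eventually_all.2 hsmall)).exists
  refine ⟨_, isProperCone_setOf_nonneg_and_norm_le (w := ∑ j, p j) hε (fun i => ?_) ?_,
    fun j => ⟨fun i => hnonneg i j, (hεp j).le⟩, fun i x hx => hx.1 i⟩
  · rw [dotProduct_sum]
    exact Finset.sum_pos' (fun j _ => hnonneg i j) ⟨i, Finset.mem_univ i, hpos i⟩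
  · calc ε * ‖∑ j, p j‖ ≤ ∑ j, ε * ‖p j‖ := by
          rw [← Finset.mul_sum]; gcongr; exact norm_sum_le _ _
      _ < ∑ j, (∑ i, f i) ⬝ᵥ p j :=
          Finset.sum_lt_sum_of_nonempty Finset.univ_nonempty fun j _ => hεp j
      _ = (∑ i, f i) ⬝ᵥ ∑ j, p j := (dotProduct_sum _ _ _).symm

lemma IsProperCone.exists_mem_dotProduct_ne_zero (hK : IsProperCone K) (hf : f ≠ 0) :
    ∃ x ∈ K, f ⬝ᵥ x ≠ 0 := by
  obtain ⟨-, -, -, -, hint⟩ := hK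
  by_contra! hzero
  have htop : LinearMap.ker (dotProductBilin ℝ ℝ f) = ⊤ :=
    Submodule.eq_top_of_nonempty_interior' _ (hint.mono (interior_mono hzero))
  exact hf (dotProduct_eq_zero f fun x => LinearMap.mem_ker.1 (htop ▸ Submodule.mem_top))

lemma invariantUnder_smul_one (hK : IsProperCone K) (hb : 0 ≤ b) : InvariantUnder (b • 1) K := by
  intro x hx
  simpa [smul_mulVec] using hK.1 b hb x hx

-- Rescaled iterates of `u + y` under `A` converge to `u`.
lemma InvariantUnder.mem_of_add_mem {u y : Fin m → ℝ} {a : ℝ} (hI : InvariantUnder A K)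
    (hK : IsProperCone K) (hb : 0 ≤ b) (hba : b < a) (hu : A *ᵥ u = a • u) (hy : A *ᵥ y = b • y)
    (huy : u + y ∈ K) : u ∈ K := by
  have ha : 0 < a := hb.trans_lt hba
  have hmem (n : ℕ) : u + (b / a) ^ n • y ∈ K := by
    induction n with
    | zero => simpa using huy
    | succ n ih =>
      have hstep : a⁻¹ • A *ᵥ (u + (b / a) ^ n • y) = u + (b / a) ^ (n + 1) • y := by
        rw [mulVec_add, mulVec_smul, hu, hy, smul_add, inv_smul_smul₀ ha.ne', smul_comm, smul_smul,
          smul_smul, pow_succ, mul_assoc, div_eq_inv_mul]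
      exact hstep ▸ hK.1 _ (inv_nonneg.2 ha.le) _ (hI _ ih)
  have hlim : Tendsto (fun n : ℕ => u + (b / a) ^ n • y) atTop (𝓝 (u + (0 : ℝ) • y)) :=
    ((tendsto_pow_atTop_nhds_zero_of_lt_one (by positivity)
      ((div_lt_one ha).2 hba)).smul_const y).const_add u
  simpa using hK.2.2.1.mem_of_tendsto hlim (.of_forall hmem)

namespace IsDominantRankOneUpdate

lemma invariantUnder (h : IsDominantRankOneUpdate A b p f) (hK : IsProperCone K) (hp : p ∈ K)
    (hf : ∀ x ∈ K, 0 ≤ f ⬝ᵥ x) : InvariantUnder A K := by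
  intro x hx
  rw [h.mulVec_eq]
  exact hK.2.1 _ (hK.1 _ h.nonneg _ hx) _ (hK.1 _ (hf x hx) _ hp)

lemma dotProduct_smul_mem (h : IsDominantRankOneUpdate A b p f) (hK : IsProperCone K)
    (hI : InvariantUnder A K) {x : Fin m → ℝ} (hx : x ∈ K) : (f ⬝ᵥ x) • p ∈ K := by
  set y := (f ⬝ᵥ p) • x - (f ⬝ᵥ x) • p with hy
  refine hI.mem_of_add_mem (y := y) hK h.nonneg (lt_add_of_pos_right b h.dotProduct_pos) ?_ ?_ ?_
  · rw [mulVec_smul, h.mulVec_left, smul_comm]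
  · refine h.mulVec_of_dotProduct_eq_zero ?_
    rw [hy, dotProduct_sub, dotProduct_smul, dotProduct_smul, smul_eq_mul, smul_eq_mul, mul_comm,
      sub_self]
  · rw [hy, add_sub_cancel]
    exact hK.1 _ h.dotProduct_pos.le _ hx

lemma units_smul_mem (h : IsDominantRankOneUpdate A b p f) (hK : IsProperCone K)
    (hI : InvariantUnder A K) {x : Fin m → ℝ} (hx : x ∈ K) {e : ℤˣ} (he : 0 < e • (f ⬝ᵥ x)) :
    e • p ∈ K := by
  have hep : (e • (f ⬝ᵥ x))⁻¹ • (f ⬝ᵥ x) • p = e • p := by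
    rcases Int.units_eq_one_or e with rfl | rfl <;>
      simp_all [Units.smul_def, smul_smul, ne_of_gt, ne_of_lt]
  exact hep ▸ hK.1 _ (inv_nonneg.2 he.le) _ (h.dotProduct_smul_mem hK hI hx)

lemma exists_sign (h : IsDominantRankOneUpdate A b p f) (hK : IsProperCone K)
    (hI : InvariantUnder A K) : ∃ e : ℤˣ, e • p ∈ K ∧ ∀ x ∈ K, 0 ≤ e • (f ⬝ᵥ x) := by
  obtain ⟨x, hx, hfx⟩ := hK.exists_mem_dotProduct_ne_zero h.right_ne_zero
  obtain ⟨e, he⟩ : ∃ e : ℤˣ, 0 < e • (f ⬝ᵥ x) := by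
    rcases hfx.lt_or_gt with hneg | hpos
    · exact ⟨-1, by simpa [Units.smul_def] using hneg⟩
    · exact ⟨1, by simpa using hpos⟩
  have hep := h.units_smul_mem hK hI hx he
  refine ⟨e, hep, fun z hz => ?_⟩
  by_contra! hez
  have hen : -(e • p) ∈ K := by
    have hez' : 0 < -e • (f ⬝ᵥ z) := by simpa [Units.smul_def] using hez
    simpa [Units.smul_def] using h.units_smul_mem hK hI hz hez'
  have hzero : e • p ∈ K ∩ -K := ⟨hep, hen⟩
  rw [hK.2.2.2.1, Set.mem_singleton_iff, smul_eq_zero_iff_eq] at hzero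
  exact h.left_ne_zero hzero

end IsDominantRankOneUpdate

variable {ι : Type*} {A : ι → Matrix (Fin m) (Fin m) ℝ} {b : ι → ℝ} {p f : ι → Fin m → ℝ}

lemma HaveCommonInvariantProperCone.of_nonscalar [NeZero m] (hA : ∀ i, 0 ≤ (A i).trace)
    (h : HaveCommonInvariantProperCone fun i : {i // ∀ c : ℝ, A i ≠ c • 1} => A i) :
    HaveCommonInvariantProperCone A := by
  obtain ⟨K, hK, hI⟩ := h
  refine ⟨K, hK, fun i => ?_⟩
  by_cases hi : ∀ c : ℝ, A i ≠ c • 1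
  · exact hI ⟨i, hi⟩
  push Not at hi
  obtain ⟨c, hc⟩ := hi
  have hc₀ : 0 ≤ c := by
    have htrace : 0 ≤ c * m := by simpa [hc] using hA i
    exact nonneg_of_mul_nonneg_left htrace (Nat.cast_pos.2 (NeZero.pos m))
  exact hc ▸ invariantUnder_smul_one hK hc₀

lemma HaveCommonInvariantProperCone.isBalanced (hK : HaveCommonInvariantProperCone A)
    (hA : ∀ i, IsDominantRankOneUpdate (A i) (b i) (p i) (f i)) :
    IsBalanced (of fun i j => f i ⬝ᵥ p j) := by
  obtain ⟨K, hK, hI⟩ := hK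
  choose e hp hf using fun i => (hA i).exists_sign hK (hI i)
  refine ⟨e, fun i j => ?_⟩
  have := hf i _ (hp j)
  rwa [dotProduct_smul, smul_smul] at this

lemma IsBalanced.haveCommonInvariantProperCone [Finite ι]
    (hM : IsBalanced (of fun i j => f i ⬝ᵥ p j))
    (hA : ∀ i, IsDominantRankOneUpdate (A i) (b i) (p i) (f i)) :
    HaveCommonInvariantProperCone A := by
  obtain ⟨e, he⟩ := hM
  have hA' (i) := (hA i).units_smul (e i)
  obtain ⟨K, hK, hp, hf⟩ := exists_isProperCone_mem_and_dotProduct_nonneg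
    (fun i => (hA' i).dotProduct_pos) fun i j => by
      rw [smul_dotProduct, dotProduct_smul, smul_smul]
      exact he i j
  exact ⟨K, hK, fun i => (hA' i).invariantUnder hK (hp i) (hf i)⟩

end Cone

section PlanarFamily

variable {ι : Type*} [Finite ι] {A : ι → Matrix (Fin 2) (Fin 2) ℝ}

section DominantRankOneUpdate

variable {b : ι → ℝ} {p f : ι → Fin 2 → ℝ}
  (hA : ∀ i, IsDominantRankOneUpdate (A i) (b i) (p i) (f i))
include hA

theorem haveCommonInvariantProperCone_of_forall_fin_four
    (h₄ : ∀ φ : Fin 4 → ι, HaveCommonInvariantProperCone (A ∘ φ)) :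
    HaveCommonInvariantProperCone A := by
  have hM (i) : f i ⬝ᵥ p i ≠ 0 := (hA i).dotProduct_pos.ne'
  refine IsBalanced.haveCommonInvariantProperCone
    (isBalanced_of_forall_fin_four hM (fun i j k l hij hjk hkl => ?_)
      fun φ => (h₄ φ).isBalanced fun i => hA (φ i)) hA
  simp only [not_linked_iff, of_apply] at hij hjk hkl ⊢
  exact ⟨dotProduct_eq_zero_of_path (hA j).left_ne_zero (hA k).right_ne_zero hij.1 hjk.2 hkl.1,
    dotProduct_eq_zero_of_path (hA k).left_ne_zero (hA j).right_ne_zero hkl.2 hjk.1 hij.2⟩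

theorem haveCommonInvariantProperCone_of_forall_fin_three
    (hpair : ∀ i j k l, i ≠ j → k ≠ l → SimDiag (A i) (A j) → SimDiag (A k) (A l) →
      ({i, j} : Set ι) = {k, l})
    (h₃ : ∀ φ : Fin 3 → ι, HaveCommonInvariantProperCone (A ∘ φ)) :
    HaveCommonInvariantProperCone A := by
  have hunlinked {i j} (h : ¬ Linked (of fun i j => f i ⬝ᵥ p j) i j) :
      i ≠ j ∧ SimDiag (A i) (A j) := by
    rw [not_linked_iff, of_apply, of_apply] at h
    refine ⟨?_, (hA i).simDiag (hA j) h.1 h.2⟩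
    rintro rfl
    exact (hA i).dotProduct_pos.ne' h.1
  refine IsBalanced.haveCommonInvariantProperCone
    (isBalanced_of_forall_fin_three (fun i j k l hij hkl => ?_)
      fun φ => (h₃ φ).isBalanced fun i => hA (φ i)) hA
  exact hpair i j k l (hunlinked hij).1 (hunlinked hkl).1 (hunlinked hij).2 (hunlinked hkl).2

end DominantRankOneUpdate

theorem four_matrices_suffice_general (hdiag : ∀ i, IsDiagonalizable (A i))
    (htr : ∀ i, 0 ≤ (A i).trace) (hdet : ∀ i, 0 ≤ (A i).det) :
    ((∀ φ : Fin 4 → ι, HaveCommonInvariantProperCone (A ∘ φ)) →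
      HaveCommonInvariantProperCone A) ∧
    ((∀ i j k l, (∀ x ∈ ({i, j, k, l} : Set ι), ∀ c : ℝ, A x ≠ c • 1) → i ≠ j → k ≠ l →
        SimDiag (A i) (A j) → SimDiag (A k) (A l) → ({i, j} : Set ι) = {k, l}) →
      (∀ φ : Fin 3 → ι, HaveCommonInvariantProperCone (A ∘ φ)) →
      HaveCommonInvariantProperCone A) := by
  choose b p f hA using fun i : {i // ∀ c : ℝ, A i ≠ c • 1} =>
    (hdiag i).exists_isDominantRankOneUpdate (htr i) (hdet i) i.2
  refine ⟨fun h₄ => .of_nonscalar htr ?_, fun hpair h₃ => .of_nonscalar htr ?_⟩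
  · exact haveCommonInvariantProperCone_of_forall_fin_four hA fun φ => h₄ (Subtype.val ∘ φ)
  · refine haveCommonInvariantProperCone_of_forall_fin_three hA (fun i j k l hij hkl hs ht => ?_)
      fun φ => h₃ (Subtype.val ∘ φ)
    refine Subtype.val_injective.image_injective ?_
    simpa only [Set.image_pair] using hpair i j k l (by simp [i.2, j.2, k.2, l.2])
      (Subtype.coe_ne_coe.2 hij) (Subtype.coe_ne_coe.2 hkl) hs ht

end PlanarFamily

/-- Theorem: for a finite family of diagonalizable `2×2` Vandergraft
matrices with nonnegative determinants: if every four of them have a common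
invariant proper cone, then the whole family does; and if at most one pair
of them is simultaneously diagonalizable, it suffices that every three of
them have a common invariant proper cone. -/
theorem four_matrices_suffice
    (n : ℕ) (A : Fin n → Matrix (Fin 2) (Fin 2) ℝ)
    (hdiag : ∀ j, IsDiagonalizable (A j))
    (hV : ∀ j, IsVandergraft (A j))
    (hdet : ∀ j, 0 ≤ (A j).det) :
    ((∀ i j k l : Fin n, ∃ K : Set (Fin 2 → ℝ), IsProperCone K ∧
        InvariantUnder (A i) K ∧ InvariantUnder (A j) K ∧
        InvariantUnder (A k) K ∧ InvariantUnder (A l) K) →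
      ∃ K : Set (Fin 2 → ℝ), IsProperCone K ∧ ∀ j, InvariantUnder (A j) K) ∧
    ((∀ i j k l : Fin n, i ≠ j → k ≠ l →
        SimDiag (A i) (A j) → SimDiag (A k) (A l) →
          ({i, j} : Finset (Fin n)) = {k, l}) →
      (∀ i j k : Fin n, ∃ K : Set (Fin 2 → ℝ), IsProperCone K ∧
        InvariantUnder (A i) K ∧ InvariantUnder (A j) K ∧ InvariantUnder (A k) K) →
      ∃ K : Set (Fin 2 → ℝ), IsProperCone K ∧ ∀ j, InvariantUnder (A j) K) := by
  have h := four_matrices_suffice_general hdiag (fun j => (hV j).2) hdet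
  refine ⟨fun h₄ => h.1 fun φ => ?_, fun hpair h₃ => h.2 (fun i j k l _ hij hkl hs ht => ?_)
    fun φ => ?_⟩
  · simpa [HaveCommonInvariantProperCone, Fin.forall_fin_succ] using h₄ (φ 0) (φ 1) (φ 2) (φ 3)
  · rw [← Finset.coe_pair, ← Finset.coe_pair, hpair i j k l hij hkl hs ht]
  · simpa [HaveCommonInvariantProperCone, Fin.forall_fin_succ] using h₃ (φ 0) (φ 1) (φ 2)
end

section
/- Let A₁,…,A_q be pairwise commuting real m×m matrices, let λ₀ ∈ ℝ, and suppose there is a nonzero x ∈ ℝ^m with A_j x = λ₀ x for j = 1,…,q, and that λ₀ is a simple root of the minimal polynomial of A_j for each j. Then there exists an invertible real m×m matrix S such that for every j, S⁻¹A_jS is block diagonal of the form diag(λ₀, B_j), where B_j is an (m−1)×(m−1) real matrix (i.e., the first row and first column of S⁻¹A_jS vanish except for the (1,1) entry, which equals λ₀). -/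
/-!
Put `g j = A j - λ₀`. Since `λ₀` is a simple root of the minimal polynomial, the space splits as
`ker (g j) ⊕ range (g j)`, and the projections onto the kernels commute with every `g i`. Applying
these projections one after the other shows that the common eigenvector `x` lies outside the sum of
all the ranges, so some functional `φ` with `φ x = 1` vanishes on every range. Such a `φ` is a
common left eigenvector, hence `ker φ` is an invariant complement of the line through `x`.
-/

open Module LinearMap Polynomial
open scoped Matrix

section Module

variable {R M ι : Type*}

lemma ker_mem_invtSubmodule_of_commute [Semiring R] [AddCommMonoid M] [Module R M] {f g : End R M}
    (h : Commute f g) : ker f ∈ End.invtSubmodule g := fun v hv ↦ by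
  rw [Submodule.mem_comap, mem_ker, ← End.mul_apply, h.eq, End.mul_apply, mem_ker.mp hv, map_zero]

lemma range_mem_invtSubmodule_of_commute [Semiring R] [AddCommMonoid M] [Module R M]
    {f g : End R M} (h : Commute f g) : range f ∈ End.invtSubmodule g := by
  rintro _ ⟨v, rfl⟩
  exact ⟨g v, congr($h v)⟩

variable [Ring R] [AddCommGroup M] [Module R M]

lemma commute_projection_ker_range {f g : End R M} (h : Commute f g)
    (hf : IsCompl (ker f) (range f)) : Commute ((ker f).projection (range f) hf) g := by
  rw [(Submodule.isIdempotentElem_projection hf).commute_iff, Submodule.range_projection,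
    Submodule.ker_projection]
  exact ⟨ker_mem_invtSubmodule_of_commute h, range_mem_invtSubmodule_of_commute h⟩

lemma disjoint_biInf_ker_biSup_range {g : ι → End R M} (hcomm : ∀ i j, Commute (g i) (g j))
    (hg : ∀ i, IsCompl (ker (g i)) (range (g i))) (s : Finset ι) :
    Disjoint (⨅ i ∈ s, ker (g i)) (⨆ i ∈ s, range (g i)) := by
  classical
  induction s using Finset.induction_on with
  | empty => simp
  | insert k s _ ih =>
    rw [Finset.iInf_insert, Finset.iSup_insert, Submodule.disjoint_def]
    rintro x ⟨hxk, hxs⟩ hx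
    obtain ⟨u, hu, r, hr, rfl⟩ := Submodule.mem_sup.mp hx
    set P := (ker (g k)).projection (range (g k)) (hg k)
    have hP_maps : (⨆ i ∈ s, range (g i)).map P ≤ ⨆ i ∈ s, range (g i) := by
      simp only [Submodule.map_iSup]
      exact iSup₂_mono fun i _ ↦ Submodule.map_le_iff_le_comap.mpr <|
        range_mem_invtSubmodule_of_commute (commute_projection_ker_range (hcomm k i) (hg k)).symm
    have hPr : P r = u + r := by
      rw [← Submodule.projection_apply_of_mem_left (hg k) hxk, map_add,
        (Submodule.projection_apply_eq_zero_iff (hg k)).mpr hu, zero_add]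
    exact Submodule.disjoint_def.mp ih _ hxs (hPr ▸ hP_maps ⟨r, hr, rfl⟩)

theorem disjoint_iInf_ker_iSup_range {g : ι → End R M} (hcomm : ∀ i j, Commute (g i) (g j))
    (hg : ∀ i, IsCompl (ker (g i)) (range (g i))) :
    Disjoint (⨅ i, ker (g i)) (⨆ i, range (g i)) := by
  refine Submodule.disjoint_def.mpr fun x hker hrange ↦ ?_
  obtain ⟨s, hs⟩ := Submodule.mem_iSup_iff_exists_finset.mp hrange
  exact Submodule.disjoint_def.mp (disjoint_biInf_ker_biSup_range hcomm hg s) x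
    ((le_iInf₂ fun i _ ↦ iInf_le _ i : (⨅ i, ker (g i)) ≤ _) hker) hs

end Module

lemma isCompl_ker_aeval_range_aeval {R M : Type*} [CommRing R] [AddCommGroup M] [Module R M]
    {f : End R M} {p q : R[X]} (hpq : IsCoprime p q) (hf : aeval f (p * q) = 0) :
    IsCompl (ker (aeval f p)) (range (aeval f p)) := by
  have hrange_p : range (aeval f p) ≤ ker (aeval f q) :=
    range_le_ker_iff.mpr <| by rw [← End.mul_eq_comp, ← map_mul, mul_comm, hf]
  have hrange_q : range (aeval f q) ≤ ker (aeval f p) :=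
    range_le_ker_iff.mpr <| by rw [← End.mul_eq_comp, ← map_mul, hf]
  refine ⟨(disjoint_ker_aeval_of_isCoprime f hpq).mono_right hrange_p, codisjoint_iff.mpr ?_⟩
  rw [eq_top_iff, ← sup_aeval_range_eq_top_of_isCoprime f hpq, sup_comm]
  exact sup_le_sup_right hrange_q _

section DivisionRing

variable {K V : Type*} [DivisionRing K] [AddCommGroup V] [Module K V]

lemma exists_linearEquiv_apply_eq {x z : V} (hx : x ≠ 0) (hz : z ≠ 0) :
    ∃ e : V ≃ₗ[K] V, e z = x := by
  obtain ⟨e, he⟩ := Submodule.exists_linearEquiv_restrict_eq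
    (LinearEquiv.coord K V z hz ≪≫ₗ LinearEquiv.toSpanNonzeroSingleton K V x hx)
  refine ⟨e, ?_⟩
  simpa [LinearEquiv.coord_self] using (he ⟨z, Submodule.mem_span_singleton_self z⟩).symm

lemma exists_linearEquiv_apply_eq_and_comp_eq {x z : V} {φ ψ : V →ₗ[K] K} (hφ : φ x = 1)
    (hψ : ψ z = 1) : ∃ e : V ≃ₗ[K] V, e z = x ∧ φ ∘ₗ e = ψ := by
  have hx : x ≠ 0 := by rintro rfl; simp at hφ
  have hz : z ≠ 0 := by rintro rfl; simp at hψ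
  obtain ⟨e, rfl⟩ := exists_linearEquiv_apply_eq (K := K) hx hz
  -- `e` already matches the vectors; a transvection fixing `z` corrects the functional.
  have hfix : (ψ - φ ∘ₗ e.toLinearMap) z = 0 := by simp [hφ, hψ]
  refine ⟨LinearEquiv.transvection hfix ≪≫ₗ e, ?_, ?_⟩
  · simp [transvection.apply, hφ, hψ]
  · ext v
    simp [transvection.apply, hφ]

end DivisionRing

section Field

variable {K V ι : Type*} [Field K] [AddCommGroup V] [Module K V]

lemma isCompl_ker_range_of_rootMultiplicity_minpoly_eq_one {f : End K V} {μ : K}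
    (h : (minpoly K f).rootMultiplicity μ = 1) :
    IsCompl (ker (f - algebraMap K (End K V) μ)) (range (f - algebraMap K (End K V) μ)) := by
  have hne : minpoly K f ≠ 0 := fun h0 ↦ by simp [h0] at h
  obtain ⟨q, hq, hndvd⟩ := exists_eq_pow_rootMultiplicity_mul_and_not_dvd _ hne μ
  rw [h, pow_one] at hq
  have hcop : IsCoprime (X - C μ) q := (irreducible_X_sub_C μ).coprime_iff_not_dvd.mpr hndvd
  simpa using isCompl_ker_aeval_range_aeval hcop (hq ▸ minpoly.aeval K f)

theorem exists_dual_comp_eq_smul_of_commute {f : ι → End K V}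
    (hcomm : ∀ i j, Commute (f i) (f j)) {μ : ι → K} {x : V} (hx : x ≠ 0)
    (heig : ∀ i, f i x = μ i • x)
    (hμ : ∀ i, IsCompl (ker (f i - algebraMap K (End K V) (μ i)))
      (range (f i - algebraMap K (End K V) (μ i)))) :
    ∃ φ : Dual K V, φ x = 1 ∧ ∀ i, φ ∘ₗ f i = μ i • φ := by
  set g : ι → End K V := fun i ↦ f i - algebraMap K (End K V) (μ i)
  have hgcomm (i j : ι) : Commute (g i) (g j) :=
    ((hcomm i j).sub_left (Algebra.commutes _ _)).sub_right (Algebra.commutes _ _).symm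
  have hxker : x ∈ ⨅ i, ker (g i) := by simp [g, heig]
  have hxrange : x ∉ ⨆ i, range (g i) := fun h ↦
    hx <| Submodule.disjoint_def.mp (disjoint_iInf_ker_iSup_range hgcomm hμ) x hxker h
  obtain ⟨ψ, hψx, hψ⟩ := Submodule.exists_le_ker_of_notMem hxrange
  have hψf (i : ι) : ψ ∘ₗ f i = μ i • ψ := by
    have hψg : ψ ∘ₗ g i = 0 := range_le_ker_iff.mp <| (le_iSup _ i).trans hψ
    ext v
    simpa [g, sub_eq_zero] using congr($hψg v)
  exact ⟨(ψ x)⁻¹ • ψ, by simp [hψx], fun i ↦ by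
    rw [LinearMap.smul_comp, hψf, smul_comm]⟩

end Field

section Matrix

variable {n : Type*} [Fintype n] [DecidableEq n]

lemma inv_toMatrix'_mul_mul_toMatrix' {R : Type*} [CommRing R] (e : (n → R) ≃ₗ[R] n → R)
    (A : Matrix n n R) :
    (toMatrix' (e : (n → R) →ₗ[R] n → R))⁻¹ * A * toMatrix' (e : (n → R) →ₗ[R] n → R) =
      toMatrix' (e.symm ∘ₗ Matrix.toLin' A ∘ₗ (e : (n → R) →ₗ[R] n → R)) := by
  have hinv : (toMatrix' (e : (n → R) →ₗ[R] n → R))⁻¹ =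
      toMatrix' (e.symm : (n → R) →ₗ[R] n → R) :=
    Matrix.inv_eq_left_inv <| by rw [← toMatrix'_comp]; simp
  rw [hinv, toMatrix'_comp, toMatrix'_comp, toMatrix'_toLin', mul_assoc]

theorem simultaneous_deflation_of_commuting_general {K ι : Type*} [Field K] (i₀ : n)
    (A : ι → Matrix n n K) (hcomm : ∀ i j, Commute (A i) (A j)) (μ : ι → K) (x : n → K)
    (hx : x ≠ 0) (heig : ∀ j, (A j).mulVec x = μ j • x)
    (hsemi : ∀ j, (minpoly K (A j)).rootMultiplicity (μ j) = 1) :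
    ∃ S : Matrix n n K, IsUnit S.det ∧
      ∀ j, (S⁻¹ * A j * S) i₀ i₀ = μ j ∧
        ∀ i, i ≠ i₀ → (S⁻¹ * A j * S) i₀ i = 0 ∧ (S⁻¹ * A j * S) i i₀ = 0 := by
  obtain ⟨φ, hφx, hφ⟩ := exists_dual_comp_eq_smul_of_commute
    (f := fun j ↦ Matrix.toLin' (A j)) (fun i j ↦ (hcomm i j).map Matrix.toLinAlgEquiv') hx heig
    fun j ↦ isCompl_ker_range_of_rootMultiplicity_minpoly_eq_one <| by
      rw [Matrix.minpoly_toLin', hsemi]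
  obtain ⟨e, hex, hφe⟩ := exists_linearEquiv_apply_eq_and_comp_eq (z := Pi.single i₀ 1)
    (ψ := proj i₀) hφx (by simp)
  have hcol (j : ι) (i : n) :
      e.symm (A j *ᵥ e (Pi.single i₀ 1)) i = μ j * (Pi.single i₀ 1 : n → K) i := by
    rw [hex, heig, map_smul, ← hex, e.symm_apply_apply, Pi.smul_apply, smul_eq_mul]
  have hrow (j : ι) (v : n → K) : e.symm (A j *ᵥ e v) i₀ = μ j * v i₀ := by
    calc e.symm (A j *ᵥ e v) i₀ = φ (A j *ᵥ e v) := by simpa using congr($hφe (e.symm _)).symm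
      _ = μ j * φ (e v) := congr($(hφ j) (e v))
      _ = μ j * v i₀ := congr(μ j * $hφe v)
  refine ⟨toMatrix' e, ?_, fun j ↦ ?_⟩
  · rw [det_toMatrix']
    exact e.isUnit_det'
  · rw [inv_toMatrix'_mul_mul_toMatrix']
    exact ⟨by simp [toMatrix'_apply, hrow], fun i hi ↦
      ⟨by simp [toMatrix'_apply, hrow, hi.symm], by simp [toMatrix'_apply, hcol, hi]⟩⟩

end Matrix

/-- Theorem: if `A 1, …, A q` are commuting real `(m+1)×(m+1)` matrices,
`x ≠ 0` satisfies `A j x = λ₀ x` for all `j`, and `λ₀` is a simple root of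
the minimal polynomial of each `A j`, then there is a real invertible `S`
such that each `S⁻¹ A j S` is block diagonal `diag(λ₀, B j)`: its first row
and first column vanish except for the `(0,0)` entry, which equals `λ₀`. -/
theorem simultaneous_deflation_of_commuting
    (m q : ℕ) (A : Fin q → Matrix (Fin (m + 1)) (Fin (m + 1)) ℝ)
    (hcomm : ∀ i j, A i * A j = A j * A i)
    (lam0 : ℝ) (x : Fin (m + 1) → ℝ) (hx : x ≠ 0)
    (heig : ∀ j, (A j).mulVec x = lam0 • x)
    (hsemi : ∀ j, Polynomial.rootMultiplicity lam0 (minpoly ℝ (A j)) = 1) :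
    ∃ S : Matrix (Fin (m + 1)) (Fin (m + 1)) ℝ, IsUnit S.det ∧
      ∀ j, (S⁻¹ * A j * S) 0 0 = lam0 ∧
        ∀ i : Fin (m + 1), i ≠ 0 →
          (S⁻¹ * A j * S) 0 i = 0 ∧ (S⁻¹ * A j * S) i 0 = 0 := by
  exact simultaneous_deflation_of_commuting_general 0 A hcomm (fun _ ↦ lam0) x hx heig hsemi
end
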